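/- Let d ≥ 2. For every smooth F : S^{d-1} → (0,∞) with F(−σ) = F(σ) for all σ, the following log-Sobolev-type inequality for the spherical Laplacian holds: (d + 3 − 1/(d−1)) · ∫_{S^{d-1}} |∇_σ log F|² F dσ ≤ ∫_{S^{d-1}} Γ²_{Δ,Δ}(log F, log F) F dσ. In particular the constant Λ_Δ := d + 3 − 1/(d−1) satisfies Λ_Δ > d. -/

import Mathlib

open MeasureTheory
open scoped RealInnerProductSpace

noncomputable section

/-- Euclidean space `ℝ^d`. -/
abbrev E (d : ℕ) : Type := EuclideanSpace ℝ (Fin d)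

/-- The unit sphere `S^{d-1}` of `ℝ^d`. -/
abbrev Sph (d : ℕ) : Type := Metric.sphere (0 : E d) 1

/-- The surface measure on the unit sphere, realized as a Hausdorff measure. -/
def sphMeasure (d : ℕ) : Measure (Sph d) := μH[(d : ℝ) - 1]

open Classical in
/-- The 0-homogeneous extension of a function defined on the unit sphere. -/
def homogExt {d : ℕ} (F : Sph d → ℝ) (x : E d) : ℝ :=
  if hx : x = 0 then 0
  else F ⟨‖x‖⁻¹ • x, by
    rw [mem_sphere_zero_iff_norm, norm_smul, norm_inv, norm_norm,
      inv_mul_cancel₀ (norm_ne_zero_iff.mpr hx)]⟩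

/-- Smoothness of a function on the sphere, via its 0-homogeneous extension. -/
def SphSmooth {d : ℕ} (F : Sph d → ℝ) : Prop :=
  ContDiffOn ℝ (⊤ : ℕ∞) (homogExt F) {x : E d | x ≠ 0}

/-- Spherical gradient: the Euclidean gradient of the 0-homogeneous extension. -/
def sphGrad {d : ℕ} (F : Sph d → ℝ) (σ : Sph d) : E d :=
  gradient (homogExt F) (σ : E d)

/-- Euclidean Laplacian of a function on `ℝ^d`. -/
def lapl {d : ℕ} (f : E d → ℝ) (x : E d) : ℝ :=
  ∑ i : Fin d,
    fderiv ℝ (fun y => fderiv ℝ f y (EuclideanSpace.single i 1)) x (EuclideanSpace.single i 1)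

/-- Spherical Laplacian: the Euclidean Laplacian of the 0-homogeneous extension. -/
def sphLap {d : ℕ} (F : Sph d → ℝ) (σ : Sph d) : ℝ :=
  lapl (homogExt F) (σ : E d)

/-- The spherical linear Boltzmann operator `𝓑` with kernel `b`. -/
def sphB {d : ℕ} (b : ℝ → ℝ) (F : Sph d → ℝ) (σ : Sph d) : ℝ :=
  ∫ (σ' : Sph d), (F σ' - F σ) * b ⟪(σ' : E d), (σ : E d)⟫ ∂(sphMeasure d)

/-- The intertwined iterated carré du champ `Γ²_{𝓑,Δ}(g,g)`. -/
def Gamma2BD {d : ℕ} (b : ℝ → ℝ) (g : Sph d → ℝ) (σ : Sph d) : ℝ :=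
  (1 / 2) * sphB b (fun τ => ‖sphGrad g τ‖ ^ 2) σ
    - ⟪sphGrad g σ, sphGrad (fun τ => sphB b g τ) σ⟫

/-- The iterated carré du champ `Γ²_{Δ,Δ}(g,g)` of the spherical Laplacian. -/
def Gamma2DD {d : ℕ} (g : Sph d → ℝ) (σ : Sph d) : ℝ :=
  (1 / 2) * sphLap (fun τ => ‖sphGrad g τ‖ ^ 2) σ
    - ⟪sphGrad g σ, sphGrad (fun τ => sphLap g τ) σ⟫

/-- A collision kernel: non-negative, measurable, satisfying the Lévy condition. -/
def LevyKernel (d : ℕ) (b : ℝ → ℝ) : Prop :=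
  Measurable b ∧ (∀ c ∈ Set.Icc (-1 : ℝ) 1, 0 ≤ b c) ∧
    ∀ e : Sph d,
      Integrable
        (fun σ' : Sph d => (1 - ⟪(e : E d), (σ' : E d)⟫ ^ 2) * b ⟪(e : E d), (σ' : E d)⟫)
        (sphMeasure d)

/-- The log-Sobolev inequality `LS(Λ, b)` on the sphere. -/
def LS (d : ℕ) (b : ℝ → ℝ) (Λ : ℝ) : Prop :=
  ∀ f : Sph d → ℝ, SphSmooth f → (∀ σ, 0 < f σ) → (∀ σ, f (-σ) = f σ) →
    Λ * ∫ (σ : Sph d), (∫ (σ' : Sph d),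
          (f σ' - f σ) ^ 2 / (f σ' + f σ) * b ⟪(σ' : E d), (σ : E d)⟫ ∂(sphMeasure d))
        ∂(sphMeasure d)
      ≤ ∫ (σ : Sph d), Gamma2BD b (fun τ => Real.log (f τ)) σ * f σ ∂(sphMeasure d)

/-! Write the density as `e^F`. The spherical Bochner formula reads
`Γ²(F, F) = |Hess F|² + (d - 2) |∇F|²`. Pairing `Hess F` with the tangent projection, and its
trace-free part with that of `∇F ⊗ ∇F`, the Cauchy-Schwarz inequality gives a curvature-dimension
inequality. Integrating it against `e^F` and eliminating the mixed terms by parts bounds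
`∫ e^F (ΔF + |∇F|² / 2)²`, which is `4 ∫ (Δ e^{F/2})²`.

Symmetry enters through the spectral gap `2d ∫ |∇w|² ≤ ∫ (Δw)²` for the even function
`w = e^{F/2}`: the partial derivatives of `|x|² w(x/|x|)` are odd, and odd functions satisfy the
Poincaré inequality with constant `d - 1`, which is Wirtinger's inequality averaged over all great
circles. -/

section PeriodicFunctions

theorem memLp_ofReal_comp {f : ℝ → ℝ} (hf : Continuous f) (p : ENNReal) (a b : ℝ) :
    MemLp (fun t => (f t : ℂ)) p (volume.restrict (Set.Ioc a b)) := by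
  have hf' : Continuous fun t => (f t : ℂ) := Complex.continuous_ofReal.comp hf
  obtain ⟨C, hC⟩ := isCompact_Icc.exists_bound_of_continuousOn (s := Set.Icc a b) hf'.continuousOn
  refine MemLp.of_bound hf'.aestronglyMeasurable C ?_
  filter_upwards [ae_restrict_mem measurableSet_Ioc] with x hx
  exact hC x (Set.Ioc_subset_Icc_self hx)

theorem norm_fourierCoeffOn_le_of_hasDerivAt {f f' : ℝ → ℂ} (hf : ∀ t, HasDerivAt f (f' t) t)
    (hf' : Continuous f') (hper : f (2 * Real.pi) = f 0) {k : ℤ} (hk : k ≠ 0) :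
    ‖fourierCoeffOn Real.two_pi_pos f k‖ ≤ ‖fourierCoeffOn Real.two_pi_pos f' k‖ := by
  have hk1 : (1 : ℝ) ≤ |(k : ℝ)| := mod_cast Int.one_le_abs hk
  rw [fourierCoeffOn_of_hasDerivAt Real.two_pi_pos hk (fun t _ => hf t)
    (hf'.intervalIntegrable _ _), hper]
  simp only [Complex.ofReal_mul, Complex.ofReal_ofNat, Complex.ofReal_zero, sub_self, sub_zero,
    mul_zero, zero_sub, norm_mul, norm_neg, norm_div, norm_one, Complex.norm_real, Complex.norm_I,
    Complex.norm_intCast, Complex.norm_ofNat, Real.norm_eq_abs, abs_of_pos Real.pi_pos]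
  rw [← mul_assoc]
  refine mul_le_of_le_one_left (norm_nonneg _) ?_
  rw [div_mul_eq_mul_div, one_mul, mul_one, div_le_one (by positivity)]
  exact le_mul_of_one_le_right (by positivity) hk1

theorem wirtinger_inequality {f f' : ℝ → ℝ} (hf : ∀ t, HasDerivAt f (f' t) t)
    (hf' : Continuous f') (hper : f (2 * Real.pi) = f 0)
    (hmean : ∫ t in 0..2 * Real.pi, f t = 0) :
    ∫ t in 0..2 * Real.pi, f t ^ 2 ≤ ∫ t in 0..2 * Real.pi, f' t ^ 2 := by
  have hfc : Continuous f := continuous_iff_continuousAt.2 fun t => (hf t).continuousAt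
  have parseval {h : ℝ → ℝ} (hh : Continuous h) :=
    hasSum_sq_fourierCoeffOn Real.two_pi_pos (memLp_ofReal_comp hh 2 0 (2 * Real.pi))
  have coeff_le (k : ℤ) : ‖fourierCoeffOn Real.two_pi_pos (fun t => (f t : ℂ)) k‖ ^ 2 ≤
      ‖fourierCoeffOn Real.two_pi_pos (fun t => (f' t : ℂ)) k‖ ^ 2 := by
    rcases eq_or_ne k 0 with rfl | hk
    · have mean_zero : fourierCoeffOn Real.two_pi_pos (fun t => (f t : ℂ)) 0 = 0 := by
        simp [fourierCoeffOn_eq_integral, intervalIntegral.integral_ofReal, hmean]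
      simp [mean_zero]
    · gcongr
      exact norm_fourierCoeffOn_le_of_hasDerivAt (fun t => (hf t).ofReal_comp)
        (Complex.continuous_ofReal.comp hf') (by rw [hper]) hk
  have := hasSum_le coeff_le (parseval hfc) (parseval hf')
  simp only [sub_zero, smul_eq_mul, Complex.norm_real, Real.norm_eq_abs, sq_abs] at this
  exact le_of_mul_le_mul_left this (by positivity)

theorem integral_zero_two_mul_of_antiperiodic {f : ℝ → ℝ} {c : ℝ} (hf : Function.Antiperiodic f c)
    (hfc : Continuous f) : ∫ t in 0..2 * c, f t = 0 := by
  have second_half : ∫ t in c..2 * c, f t = -∫ t in 0..c, f t := by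
    have := intervalIntegral.integral_comp_add_right (a := 0) (b := c) f c
    rw [zero_add, ← two_mul] at this
    rw [← this, ← intervalIntegral.integral_neg]
    simp only [hf _]
  rw [← intervalIntegral.integral_add_adjacent_intervals (b := c)
    (hfc.intervalIntegrable _ _) (hfc.intervalIntegrable _ _), second_half, add_neg_cancel]

end PeriodicFunctions

section SurfaceMeasure

open Module

theorem exists_nhds_sphere_hausdorffMeasure_lt_top {V : Type*} [NormedAddCommGroup V]
    [InnerProductSpace ℝ V] [MeasurableSpace V] [BorelSpace V] {n : ℕ}
    [Fact (finrank ℝ V = n + 1)] (σ : Metric.sphere (0 : V) 1) :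
    ∃ s ∈ nhds σ, μH[n] s < ⊤ := by
  have : FiniteDimensional ℝ V := .of_fact_finrank_eq_succ n
  let v : V := -σ
  have hv : ‖v‖ = 1 := by simp [v]
  have finrank_eq : finrank ℝ (ℝ ∙ v)ᗮ = n :=
    Submodule.finrank_orthogonal_span_singleton (norm_ne_zero_iff.1 (by simp [hv]))
  have symm_zero : (stereographic hv).symm 0 = σ := by
    ext1
    simp [stereographic, stereoInvFun_apply, v]
  obtain ⟨K, t, ht, hlip⟩ := (contDiff_stereoInvFunAux.comp
    (ℝ ∙ v)ᗮ.subtypeL.contDiff : ContDiff ℝ 1 (stereoInvFunAux v ∘ _)).contDiffAt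
    |>.exists_lipschitzOnWith (x := (0 : (ℝ ∙ v)ᗮ))
  obtain ⟨s, hs, hst, hsc⟩ := local_compact_nhds ht
  have hlip' : LipschitzOnWith K (stereographic hv).symm s := (hlip.mono hst :)
  refine ⟨(stereographic hv).symm '' s, ?_,
    (hlip'.hausdorffMeasure_image_le n.cast_nonneg).trans_lt ?_⟩
  · exact symm_zero ▸ (isOpenEmbedding_stereographic_symm hv).isOpenMap.image_mem_nhds hs
  · rw [ENNReal.rpow_natCast, ← finrank_eq]
    exact ENNReal.mul_lt_top (ENNReal.pow_lt_top ENNReal.coe_lt_top) hsc.measure_lt_top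

instance isFiniteMeasure_sphMeasure (d : ℕ) : IsFiniteMeasure (sphMeasure d) := by
  rcases d with _ | n
  · infer_instance
  have : Fact (finrank ℝ (E (n + 1)) = n + 1) := ⟨finrank_euclideanSpace_fin⟩
  have : IsLocallyFiniteMeasure (sphMeasure (n + 1)) := by
    have dim_eq : ((n + 1 : ℕ) : ℝ) - 1 = n := by push_cast; ring
    rw [sphMeasure, dim_eq]
    exact ⟨exists_nhds_sphere_hausdorffMeasure_lt_top⟩
  infer_instance

end SurfaceMeasure

section OrthogonalGroup

variable {d : ℕ}

theorem Sph.ne_zero (σ : Sph d) : (σ : E d) ≠ 0 := ne_zero_of_mem_unit_sphere σ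

theorem Sph.norm_eq (σ : Sph d) : ‖(σ : E d)‖ = 1 := norm_eq_of_mem_sphere σ

theorem integrable_sphere {f : Sph d → ℝ} (hf : Continuous f) : Integrable f (sphMeasure d) :=
  hf.integrable_of_hasCompactSupport (HasCompactSupport.of_compactSpace f)

/-- The isometry of the unit sphere induced by a linear isometry of the ambient space. -/
def sphIso (L : E d ≃ₗᵢ[ℝ] E d) : Sph d ≃ᵢ Sph d where
  toFun σ := ⟨L σ, by simp⟩
  invFun σ := ⟨L.symm σ, by simp⟩
  left_inv σ := by simp
  right_inv σ := by simp
  isometry_toFun := Isometry.of_dist_eq fun σ τ => L.dist_map σ τ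

theorem integral_sphere_comp_isometry (L : E d ≃ₗᵢ[ℝ] E d) (f : E d → ℝ) :
    ∫ σ : Sph d, f (L σ) ∂(sphMeasure d) = ∫ σ : Sph d, f σ ∂(sphMeasure d) :=
  ((sphIso L).measurePreserving_hausdorffMeasure _).integral_comp
    (sphIso L).toHomeomorph.measurableEmbedding (fun σ : Sph d => f σ)

/-- The orthogonal group of `ℝ^d`, with the operator norm topology. -/
abbrev OGroup (d : ℕ) : Type := unitary (E d →L[ℝ] E d)

instance : ContinuousStar (E d →L[ℝ] E d) :=
  ⟨(ContinuousLinearMap.adjoint (𝕜 := ℝ) (E := E d) (F := E d)).continuous⟩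

theorem OGroup.norm_smul (g : OGroup d) (x : E d) : ‖g • x‖ = ‖x‖ := Unitary.norm_map g x

instance : CompactSpace (OGroup d) := by
  refine isCompact_iff_compactSpace.1 (Metric.isCompact_of_isClosed_isBounded isClosed_unitary ?_)
  refine (Metric.isBounded_closedBall (x := (0 : E d →L[ℝ] E d)) (r := 1)).subset fun g hg => ?_
  rw [mem_closedBall_zero_iff]
  exact ContinuousLinearMap.opNorm_le_bound _ zero_le_one fun x => by
    rw [one_mul]
    exact (OGroup.norm_smul ⟨g, hg⟩ x).le

instance : ContinuousSMul (OGroup d) (E d) :=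
  ⟨(continuous_subtype_val.comp continuous_fst).clm_apply continuous_snd⟩

theorem integral_integral_smul_eq (m : Measure (OGroup d)) [IsFiniteMeasure m] {f : E d → ℝ}
    (hf : Continuous fun σ : Sph d => f σ) :
    ∫ σ : Sph d, ∫ g : OGroup d, f (g • (σ : E d)) ∂m ∂(sphMeasure d) =
      m.real Set.univ * ∫ σ : Sph d, f σ ∂(sphMeasure d) := by
  have hcont : Continuous
      (Function.uncurry fun (σ : Sph d) (g : OGroup d) => f (g • (σ : E d))) := by
    have action : Continuous fun p : Sph d × OGroup d =>
        (⟨p.2 • (p.1 : E d), by simp [OGroup.norm_smul]⟩ : Sph d) := by fun_prop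
    exact hf.comp action
  rw [integral_integral_swap_of_hasCompactSupport hcont (HasCompactSupport.of_compactSpace _)]
  have invariance (g : OGroup d) : ∫ σ : Sph d, f (g • (σ : E d)) ∂(sphMeasure d) =
      ∫ σ : Sph d, f σ ∂(sphMeasure d) :=
    integral_sphere_comp_isometry (Unitary.linearIsometryEquiv g) f
  simp only [invariance, integral_const, smul_eq_mul]

theorem integral_smul_eq_of_norm_eq (m : Measure (OGroup d)) [m.IsMulRightInvariant]
    (f : E d → ℝ) {x y : E d} (h : ‖x‖ = ‖y‖) :
    ∫ g : OGroup d, f (g • x) ∂m = ∫ g : OGroup d, f (g • y) ∂m := by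
  let r : OGroup d := Unitary.linearIsometryEquiv.symm (ℝ ∙ (x - y))ᗮ.reflection
  have hr : r • x = y := Submodule.reflection_sub h
  rw [← integral_mul_right_eq_self (fun g : OGroup d => f (g • x)) r]
  simp only [mul_smul, hr]

theorem exists_integral_sphere_eq_integral_orthogonalGroup (d : ℕ) :
    ∃ m : Measure (OGroup d), IsFiniteMeasure m ∧ m.IsMulRightInvariant ∧
      ∀ f : E d → ℝ, Continuous (fun σ : Sph d => f σ) → ∀ e : E d, ‖e‖ = 1 →
        ∫ σ : Sph d, f σ ∂(sphMeasure d) = ∫ g : OGroup d, f (g • e) ∂m := by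
  let h : Measure (OGroup d) := Measure.haar.inv
  have : IsFiniteMeasure h := Measure.isFiniteMeasure_map _ _
  have mass_pos : 0 < h.real Set.univ := by
    refine ENNReal.toReal_pos ?_ (measure_ne_top _ _)
    rw [Measure.inv_apply, Set.inv_univ]
    exact NeZero.ne _
  let c : NNReal := ⟨(sphMeasure d).real Set.univ / h.real Set.univ, by positivity⟩
  refine ⟨c • h, inferInstance, inferInstance, fun f hf e he => ?_⟩
  have average := integral_integral_smul_eq h hf
  have orbit (σ : Sph d) : ∫ g : OGroup d, f (g • (σ : E d)) ∂h = ∫ g : OGroup d, f (g • e) ∂h :=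
    integral_smul_eq_of_norm_eq h f (by rw [he, σ.norm_eq])
  simp only [orbit, integral_const, smul_eq_mul] at average
  rw [integral_smul_nnreal_measure, NNReal.smul_def, smul_eq_mul]
  change _ = _ / _ * _
  rw [div_mul_eq_mul_div, eq_div_iff mass_pos.ne', average, mul_comm]

end OrthogonalGroup

theorem intervalIntegral_integral_swap_of_continuous {X : Type*} [TopologicalSpace X]
    [CompactSpace X] [T2Space X] [SecondCountableTopology X] [MeasurableSpace X] [BorelSpace X]
    (m : Measure X) [IsFiniteMeasure m] {f : ℝ → X → ℝ} (hf : Continuous (Function.uncurry f))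
    (a b : ℝ) :
    ∫ t in a..b, ∫ x, f t x ∂m = ∫ x, (∫ t in a..b, f t x) ∂m := by
  apply intervalIntegral_integral_swap
  have hK : IntegrableOn (Function.uncurry f) (Set.uIcc a b ×ˢ (Set.univ : Set X))
      (volume.prod m) :=
    hf.continuousOn.integrableOn_compact (isCompact_uIcc.prod isCompact_univ)
  rw [IntegrableOn, ← Measure.prod_restrict, Measure.restrict_univ] at hK
  exact hK.mono_measure
    (Measure.prod_mono (Measure.restrict_mono Set.uIoc_subset_uIcc le_rfl) le_rfl)

section Rotation

variable {V : Type*} [NormedAddCommGroup V] [InnerProductSpace ℝ V] {u v : V}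

/-- The great circle through the orthonormal vectors `u` and `v`, parametrized by the angle
from `u`. Its velocity is `greatCircle v (-u)`. -/
def greatCircle (u v : V) (t : ℝ) : V := Real.cos t • u + Real.sin t • v

@[fun_prop]
theorem continuous_greatCircle (u v : V) : Continuous (greatCircle u v) := by
  unfold greatCircle
  fun_prop

theorem greatCircle_add_pi (u v : V) (t : ℝ) :
    greatCircle u v (t + Real.pi) = -greatCircle u v t := by
  simp only [greatCircle, Real.cos_add_pi, Real.sin_add_pi]
  module

theorem hasDerivAt_greatCircle (u v : V) (t : ℝ) :
    HasDerivAt (greatCircle u v) (greatCircle v (-u) t) t := by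
  refine (((Real.hasDerivAt_cos t).smul_const u).add
    ((Real.hasDerivAt_sin t).smul_const v)).congr_deriv ?_
  simp only [greatCircle]
  module

/-- The rotation by the angle `t` in the oriented plane spanned by the orthonormal vectors
`u` and `v`, fixing the orthogonal complement of that plane. -/
def planeRotation (hu : ‖u‖ = 1) (hv : ‖v‖ = 1) (huv : ⟪u, v⟫ = 0) (t : ℝ) : V →ₗᵢ[ℝ] V where
  toFun x := x + ⟪u, x⟫ • (greatCircle u v t - u) + ⟪v, x⟫ • (greatCircle v (-u) t - v)
  map_add' x y := by simp only [inner_add_right]; module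
  map_smul' c x := by simp only [inner_smul_right, RingHom.id_apply]; module
  norm_map' x := by
    refine (pow_left_inj₀ (norm_nonneg _) (norm_nonneg _) two_ne_zero).1 ?_
    change ‖x + ⟪u, x⟫ • (greatCircle u v t - u) + ⟪v, x⟫ • (greatCircle v (-u) t - v)‖ ^ 2 = _
    simp only [← real_inner_self_eq_norm_sq, greatCircle, inner_add_left, inner_add_right,
      inner_sub_left, inner_sub_right, inner_neg_left, inner_neg_right, real_inner_smul_left,
      inner_smul_right]
    rw [real_inner_comm v x, real_inner_comm u x, real_inner_comm u v, huv,
      real_inner_self_eq_norm_sq, real_inner_self_eq_norm_sq, real_inner_self_eq_norm_sq, hu, hv]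
    linear_combination (⟪u, x⟫ ^ 2 + ⟪v, x⟫ ^ 2) * Real.sin_sq_add_cos_sq t

variable {hu : ‖u‖ = 1} {hv : ‖v‖ = 1} {huv : ⟪u, v⟫ = 0}

theorem planeRotation_apply (t : ℝ) (x : V) : planeRotation hu hv huv t x =
    x + ⟪u, x⟫ • (greatCircle u v t - u) + ⟪v, x⟫ • (greatCircle v (-u) t - v) := rfl

theorem planeRotation_apply_left (t : ℝ) : planeRotation hu hv huv t u = greatCircle u v t := by
  simp [planeRotation_apply, hu, real_inner_comm u v, huv]

theorem planeRotation_apply_right (t : ℝ) :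
    planeRotation hu hv huv t v = greatCircle v (-u) t := by
  simp [planeRotation_apply, hv, huv]

@[fun_prop]
theorem continuous_planeRotation {X : Type*} [TopologicalSpace X] {s : X → ℝ} {p : X → V}
    (hs : Continuous s) (hp : Continuous p) :
    Continuous fun y => planeRotation hu hv huv (s y) (p y) := by
  simp only [planeRotation_apply]
  fun_prop

theorem hasDerivAt_planeRotation (t : ℝ) (x : V) :
    HasDerivAt (fun s => planeRotation hu hv huv s x)
      (⟪u, planeRotation hu hv huv t x⟫ • v - ⟪v, planeRotation hu hv huv t x⟫ • u) t := by
  simp only [planeRotation_apply]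
  refine ((((hasDerivAt_greatCircle u v t).sub_const u).const_smul ⟪u, x⟫).const_add x |>.add
    (((hasDerivAt_greatCircle v (-u) t).sub_const v).const_smul ⟪v, x⟫)).congr_deriv ?_
  simp only [greatCircle, inner_add_right, inner_sub_right, inner_smul_right, inner_neg_right,
    real_inner_self_eq_norm_sq, hu, hv, real_inner_comm u v, huv]
  module

theorem norm_greatCircle (hu : ‖u‖ = 1) (hv : ‖v‖ = 1) (huv : ⟪u, v⟫ = 0) (t : ℝ) :
    ‖greatCircle u v t‖ = 1 := by
  rw [← planeRotation_apply_left (hu := hu) (hv := hv) (huv := huv), LinearIsometry.norm_map, hu]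

end Rotation

section Poincare

variable {d : ℕ} {u v : E d}

theorem wirtinger_inequality_greatCircle {f : E d → ℝ} (hf : ContDiffOn ℝ 1 f {x | x ≠ 0})
    (hodd : ∀ x, f (-x) = -f x) (hu : ‖u‖ = 1) (hv : ‖v‖ = 1) (huv : ⟪u, v⟫ = 0) :
    ∫ t in 0..2 * Real.pi, f (greatCircle u v t) ^ 2 ≤
      ∫ t in 0..2 * Real.pi,
        fderiv ℝ f (greatCircle u v t) (greatCircle v (-u) t) ^ 2 := by
  have hne (t : ℝ) : greatCircle u v t ≠ 0 :=
    norm_ne_zero_iff.1 (by simp [norm_greatCircle hu hv huv])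
  have hfc : Continuous fun t => f (greatCircle u v t) :=
    hf.continuousOn.comp_continuous (continuous_greatCircle u v) hne
  have hanti : Function.Antiperiodic (fun t => f (greatCircle u v t)) Real.pi := fun t => by
    simp only [greatCircle_add_pi, hodd]
  refine wirtinger_inequality (fun t => ?_) ?_ (by simp [greatCircle])
    (integral_zero_two_mul_of_antiperiodic hanti hfc)
  · exact ((hf.contDiffAt (isOpen_ne.mem_nhds (hne t))).differentiableAt
      one_ne_zero).hasFDerivAt.comp_hasDerivAt t (hasDerivAt_greatCircle u v t)
  · exact ((hf.continuousOn_fderiv_of_isOpen isOpen_ne le_rfl).comp_continuous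
      (continuous_greatCircle u v) hne).clm_apply (continuous_greatCircle v (-u))

theorem two_pi_mul_integral_orthogonalGroup_eq (m : Measure (OGroup d)) [IsFiniteMeasure m]
    [m.IsMulRightInvariant] {F : E d → E d → ℝ} (hu : ‖u‖ = 1) (hv : ‖v‖ = 1) (huv : ⟪u, v⟫ = 0)
    (hF : Continuous fun p : ℝ × OGroup d =>
      F (p.2 • greatCircle u v p.1) (p.2 • greatCircle v (-u) p.1)) :
    2 * Real.pi * ∫ g : OGroup d, F (g • u) (g • v) ∂m =
      ∫ g : OGroup d, (∫ t in 0..2 * Real.pi,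
        F (g • greatCircle u v t) (g • greatCircle v (-u) t)) ∂m := by
  have invariance (t : ℝ) :
      ∫ g : OGroup d, F (g • greatCircle u v t) (g • greatCircle v (-u) t) ∂m =
      ∫ g : OGroup d, F (g • u) (g • v) ∂m := by
    let r : OGroup d := Unitary.linearIsometryEquiv.symm
      ((planeRotation hu hv huv t).toLinearIsometryEquiv rfl)
    have hru : r • u = greatCircle u v t :=
      planeRotation_apply_left (hu := hu) (hv := hv) (huv := huv) t
    have hrv : r • v = greatCircle v (-u) t :=
      planeRotation_apply_right (hu := hu) (hv := hv) (huv := huv) t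
    rw [← integral_mul_right_eq_self (fun g : OGroup d => F (g • u) (g • v)) r]
    simp only [mul_smul, hru, hrv]
  rw [← intervalIntegral_integral_swap_of_continuous m (f := fun t (g : OGroup d) =>
    F (g • greatCircle u v t) (g • greatCircle v (-u) t)) hF]
  simp only [invariance, intervalIntegral.integral_const, sub_zero, smul_eq_mul]

theorem integral_orthogonalGroup_sq_le (m : Measure (OGroup d)) [IsFiniteMeasure m]
    [m.IsMulRightInvariant] {f : E d → ℝ} (hf : ContDiffOn ℝ 1 f {x | x ≠ 0})
    (hodd : ∀ x, f (-x) = -f x) (hu : ‖u‖ = 1) (hv : ‖v‖ = 1) (huv : ⟪u, v⟫ = 0) :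
    ∫ g : OGroup d, f (g • u) ^ 2 ∂m ≤ ∫ g : OGroup d, fderiv ℝ f (g • u) (g • v) ^ 2 ∂m := by
  have hne (p : ℝ × OGroup d) : p.2 • greatCircle u v p.1 ≠ 0 :=
    norm_ne_zero_iff.1 (by simp [OGroup.norm_smul, norm_greatCircle hu hv huv])
  have hcircle (u v : E d) : Continuous fun p : ℝ × OGroup d => p.2 • greatCircle u v p.1 := by
    fun_prop
  have hcf : Continuous fun p : ℝ × OGroup d => f (p.2 • greatCircle u v p.1) ^ 2 :=
    (hf.continuousOn.comp_continuous (hcircle u v) hne).pow 2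
  have hcDf : Continuous fun p : ℝ × OGroup d =>
      fderiv ℝ f (p.2 • greatCircle u v p.1) (p.2 • greatCircle v (-u) p.1) ^ 2 :=
    (((hf.continuousOn_fderiv_of_isOpen isOpen_ne le_rfl).comp_continuous (hcircle u v)
      hne).clm_apply (hcircle v (-u))).pow 2
  have integrable {k : ℝ × OGroup d → ℝ} (hk : Continuous k) :
      Integrable (fun g => ∫ t in 0..2 * Real.pi, k (t, g)) m :=
    (intervalIntegral.continuous_parametric_intervalIntegral_of_continuous'
      (f := fun g t => k (t, g)) (hk.comp continuous_swap) _ _).integrable_of_hasCompactSupport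
      (HasCompactSupport.of_compactSpace _)
  refine le_of_mul_le_mul_left ?_ Real.two_pi_pos
  rw [two_pi_mul_integral_orthogonalGroup_eq m (F := fun x _ => f x ^ 2) hu hv huv hcf,
    two_pi_mul_integral_orthogonalGroup_eq m (F := fun x y => fderiv ℝ f x y ^ 2) hu hv huv hcDf]
  refine integral_mono (integrable hcf) (integrable hcDf) fun g => ?_
  have smul_greatCircle (u v : E d) (t : ℝ) :
      g • greatCircle u v t = greatCircle (g • u) (g • v) t :=
    (map_add (g : E d →L[ℝ] E d) _ _).trans
      (congrArg₂ (· + ·) (map_smul (g : E d →L[ℝ] E d) _ _) (map_smul (g : E d →L[ℝ] E d) _ _))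
  have smul_neg : g • -u = -(g • u) := map_neg (g : E d →L[ℝ] E d) u
  simp only [smul_greatCircle, smul_neg]
  refine wirtinger_inequality_greatCircle hf hodd ?_ ?_ ?_
  · rw [OGroup.norm_smul, hu]
  · rw [OGroup.norm_smul, hv]
  · exact (Unitary.inner_map_map g u v).trans huv

theorem norm_sq_sub_sq_apply_eq_sum (L : E d →L[ℝ] ℝ) (g : OGroup d) (i : Fin d) :
    ‖L‖ ^ 2 - L (g • EuclideanSpace.single i 1) ^ 2 =
      ∑ j ∈ Finset.univ.erase i, L (g • EuclideanSpace.single j 1) ^ 2 := by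
  rw [OrthonormalBasis.norm_dual
    ((EuclideanSpace.basisFun (Fin d) ℝ).map (Unitary.linearIsometryEquiv g)) L,
    sub_eq_iff_eq_add, Finset.sum_erase_add _ _ (Finset.mem_univ i)]
  simp only [OrthonormalBasis.map_apply, EuclideanSpace.basisFun_apply]
  rfl

theorem poincare_inequality_of_odd {f : E d → ℝ} (hf : ContDiffOn ℝ 1 f {x | x ≠ 0})
    (hodd : ∀ x, f (-x) = -f x) :
    ((d : ℝ) - 1) * ∫ σ : Sph d, f σ ^ 2 ∂(sphMeasure d) ≤
      ∫ σ : Sph d, (‖fderiv ℝ f σ‖ ^ 2 - fderiv ℝ f σ (σ : E d) ^ 2) ∂(sphMeasure d) := by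
  rcases d.eq_zero_or_pos with rfl | hd
  · simp [integral_of_isEmpty]
  have : NeZero d := ⟨hd.ne'⟩
  obtain ⟨m, _, _, hm⟩ := exists_integral_sphere_eq_integral_orthogonalGroup d
  let e (j : Fin d) : E d := EuclideanSpace.single j 1
  have he (j : Fin d) : ‖e j‖ = 1 := by simp [e]
  have hDf : ContinuousOn (fderiv ℝ f) {x | x ≠ 0} :=
    hf.continuousOn_fderiv_of_isOpen isOpen_ne le_rfl
  have hcf : Continuous fun σ : Sph d => f σ ^ 2 :=
    (hf.continuousOn.comp_continuous continuous_subtype_val Sph.ne_zero).pow 2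
  have hcDf : Continuous fun σ : Sph d => fderiv ℝ f σ :=
    hDf.comp_continuous continuous_subtype_val Sph.ne_zero
  rw [hm (fun x => f x ^ 2) hcf (e 0) (he 0),
    hm (fun x => ‖fderiv ℝ f x‖ ^ 2 - fderiv ℝ f x x ^ 2)
      ((hcDf.norm.pow 2).sub ((hcDf.clm_apply continuous_subtype_val).pow 2)) (e 0) (he 0)]
  simp only [e, norm_sq_sub_sq_apply_eq_sum]
  rw [integral_finsetSum]
  · calc _ = ∑ j ∈ Finset.univ.erase (0 : Fin d), ∫ g : OGroup d, f (g • e 0) ^ 2 ∂m := by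
          rw [Finset.sum_const, Finset.card_erase_of_mem (Finset.mem_univ _), Finset.card_univ,
            Fintype.card_fin, nsmul_eq_mul, Nat.cast_pred hd]
      _ ≤ _ := Finset.sum_le_sum fun j hj => integral_orthogonalGroup_sq_le m hf hodd (he 0) (he j)
          (EuclideanSpace.orthonormal_single.2 (Finset.ne_of_mem_erase hj).symm)
  · intro j _
    have hne (g : OGroup d) : g • e 0 ≠ 0 :=
      norm_ne_zero_iff.1 (by simp [OGroup.norm_smul, he])
    have horbit (x : E d) : Continuous fun g : OGroup d => g • x := by fun_prop
    exact (((hDf.comp_continuous (horbit (e 0)) hne).clm_apply (horbit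
      (e j))).pow 2).integrable_of_hasCompactSupport (HasCompactSupport.of_compactSpace _)

end Poincare

section PartialDerivatives

variable {d : ℕ} {f g : E d → ℝ} {x : E d}

/-- The `i`-th partial derivative of a function on `ℝ^d`. -/
def pderiv (i : Fin d) (f : E d → ℝ) (x : E d) : ℝ :=
  fderiv ℝ f x (EuclideanSpace.single i 1)

/-- Smoothness on `ℝ^d` away from the origin. -/
abbrev PuncturedSmooth (f : E d → ℝ) : Prop :=
  ContDiffOn ℝ (⊤ : ℕ∞) f {x | x ≠ 0}

theorem PuncturedSmooth.differentiableAt (hf : PuncturedSmooth f) (hx : x ≠ 0) :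
    DifferentiableAt ℝ f x :=
  (hf.contDiffAt (isOpen_ne.mem_nhds hx)).differentiableAt (by simp)

theorem PuncturedSmooth.pderiv (hf : PuncturedSmooth f) (i : Fin d) :
    PuncturedSmooth (pderiv i f) :=
  (hf.fderiv_of_isOpen isOpen_ne (by simp)).clm_apply contDiffOn_const

theorem fderiv_eq_sum_pderiv (f : E d → ℝ) (x v : E d) :
    fderiv ℝ f x v = ∑ i, v i * pderiv i f x := by
  conv_lhs => rw [← (EuclideanSpace.basisFun (Fin d) ℝ).sum_repr v]
  simp [pderiv]

theorem lapl_eq_sum_pderiv (f : E d → ℝ) (x : E d) :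
    lapl f x = ∑ i, pderiv i (pderiv i f) x := rfl

theorem pderiv_congr (h : ∀ x, x ≠ 0 → f x = g x) (i : Fin d) (hx : x ≠ 0) :
    pderiv i f x = pderiv i g x := by
  have heq : f =ᶠ[nhds x] g := by
    filter_upwards [isOpen_ne.mem_nhds hx] with y hy using h y hy
  rw [pderiv, pderiv, heq.fderiv_eq]

theorem lapl_congr (h : ∀ x, x ≠ 0 → f x = g x) (hx : x ≠ 0) : lapl f x = lapl g x :=
  Finset.sum_congr rfl fun i _ => pderiv_congr (fun _ hy => pderiv_congr h i hy) i hx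

theorem pderiv_coord (i j : Fin d) (x : E d) :
    pderiv i (fun y => y j) x = if j = i then 1 else 0 := by
  have h : HasFDerivAt (fun y : E d => y j) (EuclideanSpace.proj j : E d →L[ℝ] ℝ) x :=
    (EuclideanSpace.proj j : E d →L[ℝ] ℝ).hasFDerivAt
  rw [pderiv, h.fderiv]
  simp

theorem pderiv_norm_sq (i : Fin d) (x : E d) : pderiv i (fun y => ‖y‖ ^ 2) x = 2 * x i := by
  rw [pderiv, fderiv_norm_sq_apply]
  simp [EuclideanSpace.inner_single_right]

theorem pderiv_add (hf : DifferentiableAt ℝ f x) (hg : DifferentiableAt ℝ g x) (i : Fin d) :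
    pderiv i (fun y => f y + g y) x = pderiv i f x + pderiv i g x :=
  congrArg (· (EuclideanSpace.single i 1)) (fderiv_fun_add hf hg)

theorem pderiv_mul (hf : DifferentiableAt ℝ f x) (hg : DifferentiableAt ℝ g x) (i : Fin d) :
    pderiv i (fun y => f y * g y) x = f x * pderiv i g x + g x * pderiv i f x :=
  congrArg (· (EuclideanSpace.single i 1)) (fderiv_fun_mul hf hg)

theorem pderiv_const_mul (c : ℝ) (f : E d → ℝ) (i : Fin d) (x : E d) :
    pderiv i (fun y => c * f y) x = c * pderiv i f x := by
  change fderiv ℝ (c • f) x _ = _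
  rw [fderiv_const_smul_field]
  rfl

theorem pderiv_coord_mul (hf : DifferentiableAt ℝ f x) (i j : Fin d) :
    pderiv i (fun y => y j * f y) x = x j * pderiv i f x + if j = i then f x else 0 := by
  rw [pderiv_mul (by fun_prop) hf, pderiv_coord, mul_ite, mul_one, mul_zero]

theorem pderiv_exp (hf : DifferentiableAt ℝ f x) (i : Fin d) :
    pderiv i (fun y => Real.exp (f y)) x = Real.exp (f x) * pderiv i f x :=
  congrArg (· (EuclideanSpace.single i 1)) (fderiv_exp hf)

theorem pderiv_sum {ι : Type*} {s : Finset ι} {f : ι → E d → ℝ}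
    (hf : ∀ k ∈ s, DifferentiableAt ℝ (f k) x) (i : Fin d) :
    pderiv i (fun y => ∑ k ∈ s, f k y) x = ∑ k ∈ s, pderiv i (f k) x := by
  simp [pderiv, fderiv_fun_sum hf]

theorem pderiv_comm (hf : PuncturedSmooth f) (i j : Fin d) (hx : x ≠ 0) :
    pderiv i (pderiv j f) x = pderiv j (pderiv i f) x := by
  have hfx := hf.contDiffAt (isOpen_ne.mem_nhds hx)
  have hD : DifferentiableAt ℝ (fderiv ℝ f) x :=
    (hfx.fderiv_right (m := (⊤ : ℕ∞)) (by simp)).differentiableAt (by simp)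
  have second_fderiv (a b : Fin d) : pderiv a (pderiv b f) x =
      fderiv ℝ (fderiv ℝ f) x (EuclideanSpace.single a 1) (EuclideanSpace.single b 1) := by
    have h := (hD.hasFDerivAt.clm_apply (hasFDerivAt_const (EuclideanSpace.single b 1) x)).fderiv
    refine (congrArg (· (EuclideanSpace.single a 1)) h).trans ?_
    simp
  rw [second_fderiv, second_fderiv]
  refine (hfx.isSymmSndFDerivAt ?_).eq _ _
  rw [minSmoothness_of_isRCLikeNormedField]
  exact WithTop.coe_le_coe.2 (le_top : (2 : ℕ∞) ≤ ⊤)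

theorem lapl_mul (hf : PuncturedSmooth f) (hg : PuncturedSmooth g) (hx : x ≠ 0) :
    lapl (fun y => f y * g y) x =
      f x * lapl g x + g x * lapl f x + 2 * ∑ i, pderiv i f x * pderiv i g x := by
  have hd {f : E d → ℝ} (hf : PuncturedSmooth f) {x : E d} (hx : x ≠ 0) := hf.differentiableAt hx
  simp only [lapl_eq_sum_pderiv, Finset.mul_sum, ← Finset.sum_add_distrib]
  refine Finset.sum_congr rfl fun i _ => ?_
  rw [pderiv_congr (fun y hy => pderiv_mul (hd hf hy) (hd hg hy) i) i hx,
    pderiv_add (hd (hf.mul (hg.pderiv i)) hx) (hd (hg.mul (hf.pderiv i)) hx),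
    pderiv_mul (hd hf hx) (hd (hg.pderiv i) hx), pderiv_mul (hd hg hx) (hd (hf.pderiv i) hx)]
  ring

theorem lapl_norm_sq (x : E d) : lapl (fun y => ‖y‖ ^ 2) x = 2 * d := by
  have h (i : Fin d) : pderiv i (fun y : E d => ‖y‖ ^ 2) = fun y => 2 * y i :=
    funext (pderiv_norm_sq i)
  simp [lapl_eq_sum_pderiv, h, pderiv_const_mul, pderiv_coord, mul_comm]

theorem mul_pderiv_smul {t c : ℝ} (h : ∀ x, f (t • x) = c * f x) (i : Fin d) (x : E d) :
    t * pderiv i f (t • x) = c * pderiv i f x := by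
  rw [← pderiv_const_mul c f i x, ← funext h, pderiv, pderiv, fderiv_comp_smul]
  rfl

end PartialDerivatives

section SphericalDivergence

variable {d : ℕ} {f : E d → ℝ}

theorem Sph.sum_sq (σ : Sph d) : ∑ i, (σ : E d) i ^ 2 = 1 := by
  rw [← EuclideanSpace.real_norm_sq_eq, Sph.norm_eq, one_pow]

theorem continuous_sphere_fderiv_apply (hf : ContDiffOn ℝ 1 f {x | x ≠ 0}) {X : Type*}
    [TopologicalSpace X] {p q : X → E d} (hp : Continuous p) (hq : Continuous q)
    (hne : ∀ y, p y ≠ 0) : Continuous fun y => fderiv ℝ f (p y) (q y) :=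
  ((hf.continuousOn_fderiv_of_isOpen isOpen_ne le_rfl).comp_continuous hp hne).clm_apply hq

theorem integral_fderiv_rotation_eq_zero (hf : ContDiffOn ℝ 1 f {x | x ≠ 0}) {u v : E d}
    (hu : ‖u‖ = 1) (hv : ‖v‖ = 1) (huv : ⟪u, v⟫ = 0) :
    ∫ σ : Sph d, fderiv ℝ f σ (⟪u, (σ : E d)⟫ • v - ⟪v, (σ : E d)⟫ • u) ∂(sphMeasure d) = 0 := by
  let R (t : ℝ) : E d →ₗᵢ[ℝ] E d := planeRotation hu hv huv t
  let X (x : E d) : ℝ := fderiv ℝ f x (⟪u, x⟫ • v - ⟪v, x⟫ • u)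
  have invariance (g : E d → ℝ) (t : ℝ) :
      ∫ σ : Sph d, g (R t σ) ∂(sphMeasure d) = ∫ σ : Sph d, g σ ∂(sphMeasure d) :=
    integral_sphere_comp_isometry ((R t).toLinearIsometryEquiv rfl) g
  have hR : Continuous fun p : ℝ × Sph d => R p.1 p.2 :=
    continuous_planeRotation continuous_fst (continuous_subtype_val.comp continuous_snd)
  have hne (t : ℝ) (σ : Sph d) : R t σ ≠ 0 :=
    norm_ne_zero_iff.1 (by rw [LinearIsometry.norm_map, Sph.norm_eq]; exact one_ne_zero)
  have hX : Continuous fun p : ℝ × Sph d => X (R p.1 p.2) :=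
    continuous_sphere_fderiv_apply hf hR (by fun_prop) fun p => hne p.1 p.2
  have hderiv (σ : Sph d) (t : ℝ) : HasDerivAt (fun s => f (R s σ)) (X (R t σ)) t :=
    ((hf.contDiffAt (isOpen_ne.mem_nhds (hne t σ))).differentiableAt
      one_ne_zero).hasFDerivAt.comp_hasDerivAt t (hasDerivAt_planeRotation t (σ : E d))
  have integrable (t : ℝ) : Integrable (fun σ : Sph d => f (R t σ)) (sphMeasure d) :=
    integrable_sphere (hf.continuousOn.comp_continuous (by fun_prop) (hne t))
  calc ∫ σ : Sph d, X σ ∂(sphMeasure d)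
      = ∫ t in (0 : ℝ)..1, ∫ σ : Sph d, X (R t σ) ∂(sphMeasure d) := by simp [invariance]
    _ = ∫ σ : Sph d, (∫ t in (0 : ℝ)..1, X (R t σ)) ∂(sphMeasure d) :=
        intervalIntegral_integral_swap_of_continuous (sphMeasure d)
          (f := fun t (σ : Sph d) => X (R t σ)) hX 0 1
    _ = ∫ σ : Sph d, (f (R 1 σ) - f (R 0 σ)) ∂(sphMeasure d) := by
        congr 1 with σ
        exact intervalIntegral.integral_eq_sub_of_hasDerivAt (fun t _ => hderiv σ t)
          ((hX.comp (continuous_id.prodMk continuous_const)).intervalIntegrable _ _)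
    _ = 0 := by
        rw [integral_sub (integrable 1) (integrable 0), invariance, invariance, sub_self]

theorem integral_coord_mul_pderiv_sub_eq_zero (hf : ContDiffOn ℝ 1 f {x | x ≠ 0}) (i j : Fin d) :
    ∫ σ : Sph d, ((σ : E d) i * pderiv j f σ - (σ : E d) j * pderiv i f σ) ∂(sphMeasure d) =
      0 := by
  rcases eq_or_ne i j with rfl | hij
  · simp
  simpa [EuclideanSpace.inner_single_left, pderiv] using
    integral_fderiv_rotation_eq_zero hf (u := EuclideanSpace.single i 1)
      (v := EuclideanSpace.single j 1) (by simp) (by simp) (EuclideanSpace.orthonormal_single.2 hij)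

theorem continuous_sphere_pderiv (hf : ContDiffOn ℝ 1 f {x | x ≠ 0}) (i : Fin d) :
    Continuous fun σ : Sph d => pderiv i f σ :=
  continuous_sphere_fderiv_apply hf continuous_subtype_val continuous_const Sph.ne_zero

theorem integral_pderiv_eq (hf : ContDiffOn ℝ 1 f {x | x ≠ 0}) (j : Fin d) :
    ∫ σ : Sph d, pderiv j f σ ∂(sphMeasure d) =
      ∫ σ : Sph d, (σ : E d) j *
        (((d : ℝ) - 1) * f σ + fderiv ℝ f σ σ) ∂(sphMeasure d) := by
  have hxf (i : Fin d) : ContDiffOn ℝ 1 (fun x => x i * f x) {x : E d | x ≠ 0} := by fun_prop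
  have hcf : Continuous fun σ : Sph d => f σ :=
    hf.continuousOn.comp_continuous continuous_subtype_val Sph.ne_zero
  have hcDf := continuous_sphere_pderiv hf j
  have hcDr := continuous_sphere_fderiv_apply hf continuous_subtype_val continuous_subtype_val
    Sph.ne_zero
  have hrad : Continuous fun σ : Sph d =>
      (σ : E d) j * (((d : ℝ) - 1) * f σ + fderiv ℝ f σ σ) :=
    Continuous.mul (by fun_prop) ((continuous_const.mul hcf).add hcDr)
  have hcDxf (i j : Fin d) := continuous_sphere_pderiv (hxf i) j
  have pointwise (σ : Sph d) :
      ∑ i, ((σ : E d) i * pderiv j (fun x => x i * f x) σ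
        - (σ : E d) j * pderiv i (fun x => x i * f x) σ) =
      pderiv j f σ -
        (σ : E d) j * (((d : ℝ) - 1) * f σ + fderiv ℝ f σ σ) := by
    have hfσ : DifferentiableAt ℝ f σ :=
      (hf.contDiffAt (isOpen_ne.mem_nhds σ.ne_zero)).differentiableAt one_ne_zero
    have hterm (i : Fin d) : (σ : E d) i * pderiv j (fun x => x i * f x) σ
        - (σ : E d) j * pderiv i (fun x => x i * f x) σ =
        (σ : E d) i ^ 2 * pderiv j f σ + (if i = j then (σ : E d) i * f σ else 0)
          - (σ : E d) j * f σ - (σ : E d) j * ((σ : E d) i * pderiv i f σ) := by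
      rw [pderiv_coord_mul hfσ, pderiv_coord_mul hfσ, if_pos rfl]
      split_ifs <;> ring
    simp only [hterm, Finset.sum_sub_distrib, Finset.sum_add_distrib, ← Finset.sum_mul,
      ← Finset.mul_sum, Sph.sum_sq, Finset.sum_ite_eq', Finset.mem_univ, if_true,
      fderiv_eq_sum_pderiv f]
    simp only [one_mul, Finset.sum_const, Finset.card_univ, Fintype.card_fin, nsmul_eq_mul]
    ring
  have hsum : ∫ σ : Sph d, ∑ i, ((σ : E d) i * pderiv j (fun x => x i * f x) σ
      - (σ : E d) j * pderiv i (fun x => x i * f x) σ) ∂(sphMeasure d) = 0 := by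
    rw [integral_finsetSum _ fun i _ => integrable_sphere (by fun_prop)]
    exact Finset.sum_eq_zero fun i _ => integral_coord_mul_pderiv_sub_eq_zero (hxf i) i j
  simp only [pointwise] at hsum
  rwa [integral_sub (integrable_sphere (by fun_prop)) (integrable_sphere hrad),
    sub_eq_zero] at hsum

theorem integral_divergence_eq_zero {W : Fin d → E d → ℝ}
    (hW : ∀ i, ContDiffOn ℝ 1 (W i) {x | x ≠ 0}) (htan : ∀ x, x ≠ 0 → ∑ i, x i * W i x = 0) :
    ∫ σ : Sph d, ∑ i, pderiv i (W i) σ ∂(sphMeasure d) = 0 := by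
  have hdW (i : Fin d) {x : E d} (hx : x ≠ 0) : DifferentiableAt ℝ (W i) x :=
    ((hW i).contDiffAt (isOpen_ne.mem_nhds hx)).differentiableAt one_ne_zero
  have hcW (i : Fin d) : Continuous fun σ : Sph d => W i σ :=
    (hW i).continuousOn.comp_continuous continuous_subtype_val Sph.ne_zero
  have hcDr (i : Fin d) := continuous_sphere_fderiv_apply (hW i) continuous_subtype_val
    continuous_subtype_val Sph.ne_zero
  have hrad (j : Fin d) : Continuous fun σ : Sph d =>
      (σ : E d) j * (((d : ℝ) - 1) * W j σ + fderiv ℝ (W j) σ σ) :=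
    Continuous.mul (by fun_prop) ((continuous_const.mul (hcW j)).add (hcDr j))
  have pderiv_htan (i : Fin d) {x : E d} (hx : x ≠ 0) :
      W i x + ∑ j, x j * pderiv i (W j) x = 0 := by
    have h := pderiv_congr htan i hx
    rw [pderiv_sum fun j _ => DifferentiableAt.fun_mul (by fun_prop) (hdW j hx)] at h
    simp only [pderiv_coord_mul (hdW _ hx), Finset.sum_add_distrib] at h
    simpa [pderiv, add_comm] using h
  have radial (σ : Sph d) :
      ∑ j, (σ : E d) j * (((d : ℝ) - 1) * W j σ + fderiv ℝ (W j) σ σ) = 0 := by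
    calc _ = ((d : ℝ) - 1) * ∑ j, (σ : E d) j * W j σ +
          ∑ i, (σ : E d) i * ∑ j, (σ : E d) j * pderiv i (W j) σ := by
          simp only [fderiv_eq_sum_pderiv, mul_add, Finset.sum_add_distrib, Finset.mul_sum]
          rw [Finset.sum_comm (f := fun j i => (σ : E d) j * ((σ : E d) i * pderiv i (W j) σ))]
          simp only [mul_left_comm]
      _ = 0 := by
          simp only [eq_neg_of_add_eq_zero_right (pderiv_htan _ σ.ne_zero), mul_neg,
            Finset.sum_neg_distrib, htan σ σ.ne_zero, mul_zero, neg_zero, add_zero]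
  rw [integral_finsetSum _ fun i _ => integrable_sphere (continuous_sphere_pderiv (hW i) i)]
  simp only [integral_pderiv_eq (hW _)]
  rw [← integral_finsetSum _ fun i _ => integrable_sphere (hrad i)]
  simp only [radial, integral_zero]

end SphericalDivergence

section SphereCalculus

variable {d : ℕ} {F G : Sph d → ℝ} {f : E d → ℝ} {x : E d}

theorem homogExt_apply_of_ne_zero (F : Sph d → ℝ) (hx : x ≠ 0) :
    homogExt F x = F ⟨‖x‖⁻¹ • x, by simp [norm_smul, hx]⟩ := by
  rw [homogExt, dif_neg hx]

theorem homogExt_sphere (F : Sph d → ℝ) (σ : Sph d) : homogExt F σ = F σ := by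
  rw [homogExt_apply_of_ne_zero F σ.ne_zero]
  simp

theorem homogExt_smul (F : Sph d → ℝ) {t : ℝ} (ht : 0 < t) (x : E d) :
    homogExt F (t • x) = homogExt F x := by
  rcases eq_or_ne x 0 with rfl | hx
  · rw [smul_zero]
  · rw [homogExt_apply_of_ne_zero F hx, homogExt_apply_of_ne_zero F (smul_ne_zero ht.ne' hx)]
    congr 2
    rw [norm_smul, Real.norm_of_nonneg ht.le, smul_smul, mul_inv_rev, mul_assoc,
      inv_mul_cancel₀ ht.ne', mul_one]

theorem homogExt_neg (hF : ∀ σ, F (-σ) = F σ) (x : E d) : homogExt F (-x) = homogExt F x := by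
  rcases eq_or_ne x 0 with rfl | hx
  · rw [neg_zero]
  · rw [homogExt_apply_of_ne_zero F hx, homogExt_apply_of_ne_zero F (neg_ne_zero.2 hx), ← hF]
    congr 1
    ext1
    simp

theorem PuncturedSmooth.sphSmooth (hf : PuncturedSmooth f) : SphSmooth fun σ : Sph d => f σ := by
  have hnormalize : ContDiffOn ℝ (⊤ : ℕ∞) (fun x : E d => ‖x‖⁻¹ • x) {x | x ≠ 0} := fun x hx =>
    (((contDiffAt_id.norm ℝ hx).inv (norm_ne_zero_iff.2 hx)).smul contDiffAt_id).contDiffWithinAt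
  refine (hf.comp hnormalize fun x hx => ?_).congr fun x hx => homogExt_apply_of_ne_zero _ hx
  exact smul_ne_zero (inv_ne_zero (norm_ne_zero_iff.2 hx)) hx

theorem SphSmooth.punctured (hF : SphSmooth F) : PuncturedSmooth (homogExt F) := hF

theorem sphSmooth_congr (h : ∀ σ : Sph d, F σ = f σ) (hf : PuncturedSmooth f) : SphSmooth F :=
  funext h ▸ hf.sphSmooth

theorem sphSmooth_const (c : ℝ) : SphSmooth fun _ : Sph d => c :=
  sphSmooth_congr (fun _ => rfl) contDiffOn_const

theorem SphSmooth.add (hF : SphSmooth F) (hG : SphSmooth G) : SphSmooth fun σ => F σ + G σ :=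
  (ContDiffOn.add hF hG).congr fun x hx => by simp only [homogExt_apply_of_ne_zero _ hx]

theorem SphSmooth.sub (hF : SphSmooth F) (hG : SphSmooth G) : SphSmooth fun σ => F σ - G σ :=
  (ContDiffOn.sub hF hG).congr fun x hx => by simp only [homogExt_apply_of_ne_zero _ hx]

theorem SphSmooth.mul (hF : SphSmooth F) (hG : SphSmooth G) : SphSmooth fun σ => F σ * G σ :=
  (ContDiffOn.mul hF hG).congr fun x hx => by simp only [homogExt_apply_of_ne_zero _ hx]

theorem SphSmooth.pow (hF : SphSmooth F) (n : ℕ) : SphSmooth fun σ => F σ ^ n :=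
  (ContDiffOn.pow hF n).congr fun x hx => by simp only [homogExt_apply_of_ne_zero _ hx]

theorem SphSmooth.const_mul (c : ℝ) (hF : SphSmooth F) : SphSmooth fun σ => c * F σ :=
  (sphSmooth_const c).mul hF

theorem SphSmooth.exp (hF : SphSmooth F) : SphSmooth fun σ => Real.exp (F σ) :=
  (ContDiffOn.exp hF).congr fun x hx => by simp only [homogExt_apply_of_ne_zero _ hx]

theorem SphSmooth.log (hF : SphSmooth F) (hpos : ∀ σ, 0 < F σ) :
    SphSmooth fun σ => Real.log (F σ) :=
  (ContDiffOn.log hF fun x hx => by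
    rw [homogExt_apply_of_ne_zero _ hx]
    exact (hpos _).ne').congr fun x hx => by simp only [homogExt_apply_of_ne_zero _ hx]

theorem SphSmooth.continuous (hF : SphSmooth F) : Continuous F := by
  have h := (ContDiffOn.continuousOn hF).comp_continuous continuous_subtype_val Sph.ne_zero
  exact h.congr (homogExt_sphere F)

theorem SphSmooth.integrable (hF : SphSmooth F) : Integrable F (sphMeasure d) :=
  integrable_sphere hF.continuous

theorem sum_coord_mul_pderiv_homogExt (hF : SphSmooth F) (hx : x ≠ 0) :
    ∑ i, x i * pderiv i (homogExt F) x = 0 := by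
  have hray : HasDerivAt (fun t : ℝ => t • x) x 1 := by
    simpa using (hasDerivAt_id (1 : ℝ)).smul_const x
  have hderiv : HasDerivAt (fun t : ℝ => homogExt F (t • x)) (fderiv ℝ (homogExt F) x x) 1 := by
    have hF1 : HasFDerivAt (homogExt F) (fderiv ℝ (homogExt F) x) ((1 : ℝ) • x) := by
      rw [one_smul]
      exact (hF.punctured.differentiableAt hx).hasFDerivAt
    exact hF1.comp_hasDerivAt 1 hray
  have hconst : (fun t : ℝ => homogExt F (t • x)) =ᶠ[nhds 1] fun _ => homogExt F x := by
    filter_upwards [Ioi_mem_nhds zero_lt_one] with t ht using homogExt_smul F ht x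
  rw [← fderiv_eq_sum_pderiv]
  exact hderiv.unique ((hasDerivAt_const _ _).congr_of_eventuallyEq hconst)

theorem sum_coord_mul_pderiv_pderiv_homogExt (hF : SphSmooth F) (i : Fin d) (hx : x ≠ 0) :
    ∑ j, x j * pderiv i (pderiv j (homogExt F)) x = -pderiv i (homogExt F) x := by
  have hd (j : Fin d) := (hF.punctured.pderiv j).differentiableAt hx
  have h := pderiv_congr (fun y hy => sum_coord_mul_pderiv_homogExt hF hy) i hx
  rw [pderiv_sum fun j _ => DifferentiableAt.fun_mul (by fun_prop) (hd j)] at h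
  simp only [pderiv_coord_mul (hd _), Finset.sum_add_distrib, Finset.sum_ite_eq',
    Finset.mem_univ, if_true] at h
  rw [eq_neg_iff_add_eq_zero, h]
  simp [pderiv]

theorem sphGrad_apply (F : Sph d → ℝ) (σ : Sph d) (i : Fin d) :
    sphGrad F σ i = pderiv i (homogExt F) σ := by
  rw [pderiv, ← InnerProductSpace.toDual_symm_apply (𝕜 := ℝ),
    EuclideanSpace.inner_single_right]
  simp [sphGrad, gradient]

theorem norm_sphGrad_sq (F : Sph d → ℝ) (σ : Sph d) :
    ‖sphGrad F σ‖ ^ 2 = ∑ i, pderiv i (homogExt F) σ ^ 2 := by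
  simp only [EuclideanSpace.real_norm_sq_eq, sphGrad_apply]

theorem inner_sphGrad (F G : Sph d → ℝ) (σ : Sph d) :
    ⟪sphGrad F σ, sphGrad G σ⟫ =
      ∑ i, pderiv i (homogExt F) σ * pderiv i (homogExt G) σ := by
  simp [PiLp.inner_apply, sphGrad_apply, mul_comm]

theorem SphSmooth.inner_sphGrad (hF : SphSmooth F) (hG : SphSmooth G) :
    SphSmooth fun σ => ⟪sphGrad F σ, sphGrad G σ⟫ :=
  sphSmooth_congr (_root_.inner_sphGrad F G) <|
    ContDiffOn.sum fun i _ => (hF.punctured.pderiv i).mul (hG.punctured.pderiv i)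

theorem SphSmooth.norm_sphGrad_sq (hF : SphSmooth F) : SphSmooth fun σ => ‖sphGrad F σ‖ ^ 2 := by
  simpa only [real_inner_self_eq_norm_sq] using hF.inner_sphGrad hF

theorem SphSmooth.sphLap (hF : SphSmooth F) : SphSmooth (sphLap F) :=
  sphSmooth_congr (fun _ => rfl) <|
    ContDiffOn.sum fun i _ => (hF.punctured.pderiv i).pderiv i

theorem sphGrad_const (c : ℝ) (σ : Sph d) : sphGrad (fun _ => c) σ = 0 := by
  ext i
  rw [sphGrad_apply, pderiv_congr (fun x hx => homogExt_apply_of_ne_zero _ hx) i σ.ne_zero]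
  simp [pderiv]

theorem sphGrad_mul (hF : SphSmooth F) (hG : SphSmooth G) (σ : Sph d) :
    sphGrad (fun τ => F τ * G τ) σ = F σ • sphGrad G σ + G σ • sphGrad F σ := by
  ext i
  have h := pderiv_congr (f := homogExt fun τ => F τ * G τ)
    (g := fun y => homogExt F y * homogExt G y)
    (fun y hy => by simp only [homogExt_apply_of_ne_zero _ hy]) i σ.ne_zero
  simp [sphGrad_apply, h, pderiv_mul (hF.punctured.differentiableAt σ.ne_zero)
    (hG.punctured.differentiableAt σ.ne_zero), homogExt_sphere]

theorem pderiv_homogExt_exp (hF : SphSmooth F) (i : Fin d) (hx : x ≠ 0) :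
    pderiv i (homogExt fun τ => Real.exp (F τ)) x =
      Real.exp (homogExt F x) * pderiv i (homogExt F) x := by
  rw [pderiv_congr (g := fun y => Real.exp (homogExt F y))
    (fun y hy => by simp only [homogExt_apply_of_ne_zero _ hy]) i hx,
    pderiv_exp (hF.punctured.differentiableAt hx)]

theorem sphGrad_exp (hF : SphSmooth F) (σ : Sph d) :
    sphGrad (fun τ => Real.exp (F τ)) σ = Real.exp (F σ) • sphGrad F σ := by
  ext i
  simp [sphGrad_apply, pderiv_homogExt_exp hF i σ.ne_zero, homogExt_sphere]

theorem sphLap_exp (hF : SphSmooth F) (σ : Sph d) :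
    sphLap (fun τ => Real.exp (F τ)) σ =
      Real.exp (F σ) * (sphLap F σ + ‖sphGrad F σ‖ ^ 2) := by
  have hd := hF.punctured.differentiableAt σ.ne_zero
  have hd' (i : Fin d) := (hF.punctured.pderiv i).differentiableAt σ.ne_zero
  simp only [sphLap, lapl_eq_sum_pderiv, norm_sphGrad_sq, mul_add, Finset.mul_sum,
    ← Finset.sum_add_distrib]
  refine Finset.sum_congr rfl fun i _ => ?_
  rw [pderiv_congr (fun y hy => pderiv_homogExt_exp hF i hy) i σ.ne_zero,
    pderiv_mul hd.exp (hd' i), pderiv_exp hd, homogExt_sphere]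
  ring

theorem homogExt_const_mul (c : ℝ) (F : Sph d → ℝ) :
    homogExt (fun τ => c * F τ) = fun x => c * homogExt F x := by
  ext x
  unfold homogExt
  split_ifs <;> simp

theorem sphGrad_const_mul (c : ℝ) (F : Sph d → ℝ) (σ : Sph d) :
    sphGrad (fun τ => c * F τ) σ = c • sphGrad F σ := by
  ext i
  simp [sphGrad_apply, homogExt_const_mul, pderiv_const_mul]

theorem sphLap_const_mul (c : ℝ) (F : Sph d → ℝ) (σ : Sph d) :
    sphLap (fun τ => c * F τ) σ = c * sphLap F σ := by
  have h (i : Fin d) :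
      pderiv i (fun x => c * homogExt F x) = fun x => c * pderiv i (homogExt F) x :=
    funext (pderiv_const_mul c _ i)
  simp [sphLap, homogExt_const_mul, lapl_eq_sum_pderiv, h, pderiv_const_mul, Finset.mul_sum]

theorem integral_mul_sphLap_add_inner (hF : SphSmooth F) (hG : SphSmooth G) :
    ∫ σ, (F σ * sphLap G σ + ⟪sphGrad F σ, sphGrad G σ⟫) ∂(sphMeasure d) = 0 := by
  let W (i : Fin d) (x : E d) : ℝ := homogExt F x * pderiv i (homogExt G) x
  have hW (i : Fin d) : ContDiffOn ℝ 1 (W i) {x | x ≠ 0} :=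
    (hF.punctured.mul (hG.punctured.pderiv i)).of_le (by simp)
  have htangent (x : E d) (hx : x ≠ 0) : ∑ i, x i * W i x = 0 := by
    simp only [W, mul_left_comm, ← Finset.mul_sum, sum_coord_mul_pderiv_homogExt hG hx, mul_zero]
  have divergence (σ : Sph d) :
      ∑ i, pderiv i (W i) σ = F σ * sphLap G σ + ⟪sphGrad F σ, sphGrad G σ⟫ := by
    rw [inner_sphGrad, sphLap, lapl_eq_sum_pderiv, Finset.mul_sum, ← Finset.sum_add_distrib]
    refine Finset.sum_congr rfl fun i _ => ?_
    rw [pderiv_mul (hF.punctured.differentiableAt σ.ne_zero)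
      ((hG.punctured.pderiv i).differentiableAt σ.ne_zero), homogExt_sphere,
      mul_comm (pderiv i (homogExt F) σ)]
  simpa only [divergence] using integral_divergence_eq_zero hW htangent

theorem pderiv_homogExt_smul (F : Sph d → ℝ) {t : ℝ} (ht : 0 < t) (i : Fin d) (x : E d) :
    pderiv i (homogExt F) (t • x) = t⁻¹ * pderiv i (homogExt F) x := by
  rw [eq_inv_mul_iff_mul_eq₀ ht.ne', ← one_mul (pderiv i (homogExt F) x)]
  exact mul_pderiv_smul (fun y => by rw [homogExt_smul F ht, one_mul]) i x

theorem homogExt_norm_sphGrad_sq (F : Sph d → ℝ) (hx : x ≠ 0) :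
    homogExt (fun τ => ‖sphGrad F τ‖ ^ 2) x =
      ‖x‖ ^ 2 * ∑ i, pderiv i (homogExt F) x ^ 2 := by
  simp only [homogExt_apply_of_ne_zero _ hx, norm_sphGrad_sq,
    pderiv_homogExt_smul F (inv_pos.2 (norm_pos_iff.2 hx)), inv_inv, mul_pow, Finset.mul_sum]

theorem homogExt_sphLap (F : Sph d → ℝ) (hx : x ≠ 0) :
    homogExt (sphLap F) x = ‖x‖ ^ 2 * lapl (homogExt F) x := by
  have ht := inv_pos.2 (norm_pos_iff.2 hx)
  have second (i : Fin d) : pderiv i (pderiv i (homogExt F)) (‖x‖⁻¹ • x) =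
      ‖x‖ ^ 2 * pderiv i (pderiv i (homogExt F)) x := by
    have h := mul_pderiv_smul (pderiv_homogExt_smul F ht i) i x
    rwa [inv_inv, inv_mul_eq_iff_eq_mul₀ (norm_ne_zero_iff.2 hx), ← mul_assoc, ← sq] at h
  simp only [homogExt_apply_of_ne_zero _ hx, sphLap, lapl_eq_sum_pderiv, second, Finset.mul_sum]

end SphereCalculus

section EuclideanBochner

variable {d : ℕ} {f : E d → ℝ} {x : E d}

open Matrix

/-- The Hessian matrix of a function on `ℝ^d`. -/
def hessian (f : E d → ℝ) (x : E d) : Matrix (Fin d) (Fin d) ℝ :=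
  Matrix.of fun i j => pderiv i (pderiv j f) x

theorem hessian_isSymm (hf : PuncturedSmooth f) (hx : x ≠ 0) : (hessian f x).IsSymm :=
  Matrix.IsSymm.ext fun i j => pderiv_comm hf j i hx

theorem PuncturedSmooth.lapl (hf : PuncturedSmooth f) : PuncturedSmooth (lapl f) :=
  ContDiffOn.sum fun i _ => (hf.pderiv i).pderiv i

theorem lapl_sum {ι : Type*} {s : Finset ι} {f : ι → E d → ℝ}
    (hf : ∀ k ∈ s, PuncturedSmooth (f k)) (hx : x ≠ 0) :
    lapl (fun y => ∑ k ∈ s, f k y) x = ∑ k ∈ s, lapl (f k) x := by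
  simp only [lapl_eq_sum_pderiv]
  rw [Finset.sum_comm]
  refine Finset.sum_congr rfl fun i _ => ?_
  rw [pderiv_congr (fun y hy => pderiv_sum (fun k hk => (hf k hk).differentiableAt hy) i) i hx,
    pderiv_sum fun k hk => ((hf k hk).pderiv i).differentiableAt hx]

theorem lapl_pderiv (hf : PuncturedSmooth f) (j : Fin d) (hx : x ≠ 0) :
    lapl (pderiv j f) x = pderiv j (lapl f) x := by
  have h : pderiv j (lapl f) x = ∑ i, pderiv j (pderiv i (pderiv i f)) x :=
    pderiv_sum (fun i _ => ((hf.pderiv i).pderiv i).differentiableAt hx) j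
  rw [lapl_eq_sum_pderiv, h]
  refine Finset.sum_congr rfl fun i _ => ?_
  rw [pderiv_congr (fun y hy => pderiv_comm hf i j hy) i hx, pderiv_comm (hf.pderiv i) i j hx]

theorem trace_hessian_mul_hessian (hf : PuncturedSmooth f) (hx : x ≠ 0) :
    (hessian f x * hessian f x).trace = ∑ j, ∑ i, pderiv i (pderiv j f) x ^ 2 := by
  simp only [Matrix.trace, Matrix.diag, Matrix.mul_apply]
  refine Finset.sum_congr rfl fun j _ => Finset.sum_congr rfl fun i _ => ?_
  rw [(hessian_isSymm hf hx).apply, sq]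
  rfl

theorem lapl_sum_pderiv_sq (hf : PuncturedSmooth f) (hx : x ≠ 0) :
    lapl (fun y => ∑ j, pderiv j f y ^ 2) x =
      2 * (hessian f x * hessian f x).trace + 2 * ∑ j, pderiv j f x * pderiv j (lapl f) x := by
  simp only [sq]
  rw [lapl_sum (fun j _ => (hf.pderiv j).mul (hf.pderiv j)) hx, trace_hessian_mul_hessian hf hx]
  simp only [Finset.mul_sum, ← Finset.sum_add_distrib]
  refine Finset.sum_congr rfl fun j _ => ?_
  rw [lapl_mul (hf.pderiv j) (hf.pderiv j) hx, lapl_pderiv hf j hx, Finset.mul_sum]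
  simp only [← sq]
  ring

theorem pderiv_sum_pderiv_sq (hf : PuncturedSmooth f) (i : Fin d) (hx : x ≠ 0) :
    pderiv i (fun y => ∑ j, pderiv j f y ^ 2) x =
      2 * (hessian f x *ᵥ fun j => pderiv j f x) i := by
  have hd (j : Fin d) := (hf.pderiv j).differentiableAt hx
  simp only [sq, mulVec, dotProduct, hessian, of_apply]
  rw [pderiv_sum fun j _ => (hd j).fun_mul (hd j), Finset.mul_sum]
  refine Finset.sum_congr rfl fun j _ => ?_
  rw [pderiv_mul (hd j) (hd j)]
  ring

theorem pderiv_norm_sq_mul (hf : DifferentiableAt ℝ f x) (i : Fin d) :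
    pderiv i (fun y => ‖y‖ ^ 2 * f y) x = ‖x‖ ^ 2 * pderiv i f x + 2 * x i * f x := by
  rw [pderiv_mul (differentiable_fun_id.norm_sq ℝ x) hf, pderiv_norm_sq]
  ring

theorem lapl_norm_sq_mul (hf : PuncturedSmooth f) (hx : x ≠ 0) :
    lapl (fun y => ‖y‖ ^ 2 * f y) x =
      ‖x‖ ^ 2 * lapl f x + 4 * ∑ i, x i * pderiv i f x + 2 * d * f x := by
  rw [lapl_mul (contDiff_norm_sq ℝ).contDiffOn hf hx, lapl_norm_sq]
  simp only [pderiv_norm_sq, mul_assoc, ← Finset.mul_sum]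
  ring

end EuclideanBochner

section SphericalHessian

variable {d : ℕ} {F : Sph d → ℝ}

open Matrix

/-- The Hessian of a function on the sphere, as the matrix of a quadratic form on `ℝ^d` that
vanishes in the normal direction. The rank-one terms compensate for the normal components of the
Hessian of the 0-homogeneous extension. -/
def sphHess (F : Sph d → ℝ) (σ : Sph d) : Matrix (Fin d) (Fin d) ℝ :=
  hessian (homogExt F) σ +
    (vecMulVec (σ : E d).ofLp (sphGrad F σ).ofLp + vecMulVec (sphGrad F σ).ofLp (σ : E d).ofLp)

theorem Sph.dotProduct_self (σ : Sph d) : (σ : E d).ofLp ⬝ᵥ (σ : E d).ofLp = 1 := by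
  simpa only [dotProduct, ← sq] using σ.sum_sq

theorem ofLp_sphGrad (F : Sph d → ℝ) (σ : Sph d) :
    (sphGrad F σ).ofLp = fun i => pderiv i (homogExt F) σ :=
  funext (sphGrad_apply F σ)

theorem sphGrad_dotProduct_self (F : Sph d → ℝ) (σ : Sph d) :
    (sphGrad F σ).ofLp ⬝ᵥ (sphGrad F σ).ofLp = ‖sphGrad F σ‖ ^ 2 := by
  simp only [dotProduct, ← sq, EuclideanSpace.real_norm_sq_eq]

theorem dotProduct_sphGrad (hF : SphSmooth F) (σ : Sph d) :
    (σ : E d).ofLp ⬝ᵥ (sphGrad F σ).ofLp = 0 := by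
  simpa only [dotProduct, sphGrad_apply] using sum_coord_mul_pderiv_homogExt hF σ.ne_zero

theorem hessian_homogExt_mulVec (hF : SphSmooth F) (σ : Sph d) :
    hessian (homogExt F) σ *ᵥ (σ : E d).ofLp = -(sphGrad F σ).ofLp := by
  ext i
  simpa only [mulVec, dotProduct, hessian, of_apply, Pi.neg_apply, sphGrad_apply, mul_comm] using
    sum_coord_mul_pderiv_pderiv_homogExt hF i σ.ne_zero

theorem sphHess_isSymm (hF : SphSmooth F) (σ : Sph d) : (sphHess F σ).IsSymm := by
  refine (hessian_isSymm hF.punctured σ.ne_zero).add ?_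
  rw [Matrix.IsSymm, transpose_add, transpose_vecMulVec, transpose_vecMulVec, add_comm]

theorem sphHess_mulVec (hF : SphSmooth F) (σ : Sph d) : sphHess F σ *ᵥ (σ : E d).ofLp = 0 := by
  simp [sphHess, add_mulVec, vecMulVec_mulVec, hessian_homogExt_mulVec hF, σ.dotProduct_self,
    dotProduct_comm (sphGrad F σ).ofLp, dotProduct_sphGrad hF]

theorem trace_sphHess (hF : SphSmooth F) (σ : Sph d) : (sphHess F σ).trace = sphLap F σ := by
  simp only [sphHess, trace_add, trace_vecMulVec, dotProduct_comm (sphGrad F σ).ofLp,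
    dotProduct_sphGrad hF, add_zero]
  rfl

theorem trace_add_smul_vecMulVec_sq {ι : Type*} [Fintype ι] {A : Matrix ι ι ℝ} {x v : ι → ℝ}
    (hA : A.IsSymm) (hAx : A *ᵥ x = 0) (hx : x ⬝ᵥ x = 1) (hxv : x ⬝ᵥ v = 0) (s : ℝ) :
    ((A + s • (vecMulVec x v + vecMulVec v x)) *
      (A + s • (vecMulVec x v + vecMulVec v x))).trace =
      (A * A).trace + 2 * s ^ 2 * (v ⬝ᵥ v) := by
  have hxA : x ᵥ* A = 0 := by rw [← hA.eq, vecMul_transpose, hAx]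
  have hvx : v ⬝ᵥ x = 0 := by rw [dotProduct_comm, hxv]
  have hAv : A *ᵥ v ⬝ᵥ x = 0 := by rw [dotProduct_comm, dotProduct_mulVec, hxA, zero_dotProduct]
  have hvA : x ⬝ᵥ v ᵥ* A = 0 := by rw [dotProduct_comm, ← dotProduct_mulVec, hAx, dotProduct_zero]
  simp only [add_mul, mul_add, smul_mul_assoc, mul_smul_comm, mul_vecMulVec, vecMulVec_mul, hAx,
    hxA, vecMulVec_mulVec, trace_add, trace_smul, trace_vecMulVec, hx, hxv, hvx]
  simp only [hvA, dotProduct_zero, add_zero, smul_eq_mul, mul_zero, zero_dotProduct,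
    MulOpposite.op_zero, zero_smul, MulOpposite.op_one, one_smul, zero_add, hAv, op_smul_eq_smul,
    smul_dotProduct, hx, mul_one]
  ring

theorem trace_hessian_homogExt_sq (hF : SphSmooth F) (σ : Sph d) :
    (hessian (homogExt F) σ * hessian (homogExt F) σ).trace =
      (sphHess F σ * sphHess F σ).trace + 2 * ‖sphGrad F σ‖ ^ 2 := by
  have h := trace_add_smul_vecMulVec_sq (sphHess_isSymm hF σ) (sphHess_mulVec hF σ)
    σ.dotProduct_self (dotProduct_sphGrad hF σ) (-1)
  have hH : sphHess F σ + (-1 : ℝ) • (vecMulVec (σ : E d).ofLp (sphGrad F σ).ofLp +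
      vecMulVec (sphGrad F σ).ofLp (σ : E d).ofLp) = hessian (homogExt F) σ := by
    rw [sphHess, neg_one_smul, add_neg_cancel_right]
  rw [hH] at h
  rw [h, sphGrad_dotProduct_self]
  norm_num

theorem sphGrad_norm_sphGrad_sq (hF : SphSmooth F) (σ : Sph d) :
    (sphGrad (fun τ => ‖sphGrad F τ‖ ^ 2) σ).ofLp =
      (2 : ℝ) • (hessian (homogExt F) σ *ᵥ (sphGrad F σ).ofLp +
        ‖sphGrad F σ‖ ^ 2 • (σ : E d).ofLp) := by
  have hN : PuncturedSmooth fun y => ∑ j, pderiv j (homogExt F) y ^ 2 :=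
    ContDiffOn.sum fun j _ => (hF.punctured.pderiv j).pow 2
  ext i
  rw [sphGrad_apply, pderiv_congr (fun x hx => homogExt_norm_sphGrad_sq F hx) i σ.ne_zero,
    pderiv_norm_sq_mul (hN.differentiableAt σ.ne_zero),
    pderiv_sum_pderiv_sq hF.punctured i σ.ne_zero, ← norm_sphGrad_sq, ← ofLp_sphGrad, σ.norm_eq]
  simp only [Pi.smul_apply, Pi.add_apply, smul_eq_mul]
  ring

theorem inner_sphGrad_norm_sphGrad_sq (hF : SphSmooth F) (σ : Sph d) :
    ⟪sphGrad (fun τ => ‖sphGrad F τ‖ ^ 2) σ, sphGrad F σ⟫ =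
      2 * ((sphGrad F σ).ofLp ⬝ᵥ sphHess F σ *ᵥ (sphGrad F σ).ofLp) := by
  have hvx : (sphGrad F σ).ofLp ⬝ᵥ (σ : E d).ofLp = 0 := by
    rw [dotProduct_comm, dotProduct_sphGrad hF]
  rw [EuclideanSpace.inner_eq_star_dotProduct, sphGrad_norm_sphGrad_sq hF]
  simp [sphHess, add_mulVec, vecMulVec_mulVec, dotProduct_add, hvx, dotProduct_sphGrad hF]

theorem sum_coord_mul_pderiv_sum_pderiv_sq (hF : SphSmooth F) (σ : Sph d) :
    ∑ i, (σ : E d) i * pderiv i (fun y => ∑ j, pderiv j (homogExt F) y ^ 2) σ =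
      -2 * ‖sphGrad F σ‖ ^ 2 := by
  simp only [pderiv_sum_pderiv_sq hF.punctured _ σ.ne_zero, ← ofLp_sphGrad,
    mul_left_comm _ (2 : ℝ), ← Finset.mul_sum]
  rw [← dotProduct, dotProduct_mulVec, ← mulVec_transpose,
    (hessian_isSymm hF.punctured σ.ne_zero).eq, hessian_homogExt_mulVec hF, neg_dotProduct,
    sphGrad_dotProduct_self, mul_neg, neg_mul]

theorem inner_sphGrad_sphLap (hF : SphSmooth F) (σ : Sph d) :
    ⟪sphGrad F σ, sphGrad (sphLap F) σ⟫ =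
      ∑ j, pderiv j (homogExt F) σ * pderiv j (lapl (homogExt F)) σ := by
  have hradial := sum_coord_mul_pderiv_homogExt hF σ.ne_zero
  have h (i : Fin d) : pderiv i (homogExt (sphLap F)) σ =
      pderiv i (lapl (homogExt F)) σ + 2 * (σ : E d) i * lapl (homogExt F) σ := by
    rw [pderiv_congr (fun x hx => homogExt_sphLap F hx) i σ.ne_zero,
      pderiv_norm_sq_mul (hF.punctured.lapl.differentiableAt σ.ne_zero), σ.norm_eq]
    ring
  calc _ = ∑ j, pderiv j (homogExt F) σ * pderiv j (lapl (homogExt F)) σ +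
        2 * lapl (homogExt F) σ * ∑ j, (σ : E d) j * pderiv j (homogExt F) σ := by
        rw [inner_sphGrad, Finset.mul_sum, ← Finset.sum_add_distrib]
        exact Finset.sum_congr rfl fun j _ => by rw [h]; ring
    _ = _ := by rw [hradial, mul_zero, add_zero]

theorem Gamma2DD_eq_trace_add (hF : SphSmooth F) (σ : Sph d) :
    Gamma2DD F σ = (sphHess F σ * sphHess F σ).trace + ((d : ℝ) - 2) * ‖sphGrad F σ‖ ^ 2 := by
  rw [Gamma2DD, inner_sphGrad_sphLap hF, sphLap,
    lapl_congr (fun x hx => homogExt_norm_sphGrad_sq F hx) σ.ne_zero,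
    lapl_norm_sq_mul ?_ σ.ne_zero, sum_coord_mul_pderiv_sum_pderiv_sq hF,
    lapl_sum_pderiv_sq hF.punctured σ.ne_zero, trace_hessian_homogExt_sq hF, ← norm_sphGrad_sq,
    σ.norm_eq]
  · ring
  · exact ContDiffOn.sum fun j _ => (hF.punctured.pderiv j).pow 2

end SphericalHessian

section CurvatureDimension

open Matrix

theorem trace_mul_sq_le_of_isSymm {ι : Type*} [Fintype ι] {A B : Matrix ι ι ℝ} (hA : A.IsSymm)
    (hB : B.IsSymm) : (A * B).trace ^ 2 ≤ (A * A).trace * (B * B).trace := by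
  have trace_mul (M : Matrix ι ι ℝ) {N : Matrix ι ι ℝ} (hN : N.IsSymm) :
      (M * N).trace = ∑ p : ι × ι, M p.1 p.2 * N p.1 p.2 := by
    rw [Fintype.sum_prod_type]
    refine Finset.sum_congr rfl fun i _ => (mul_apply ..).trans ?_
    exact Finset.sum_congr rfl fun j _ => by rw [hN.apply]
  simp only [trace_mul _ hA, trace_mul _ hB, ← sq]
  exact Finset.sum_mul_sq_le_sq_mul_sq _ _ _

theorem sq_le_of_isSymm_of_mul_projection {ι : Type*} [Fintype ι] {A P : Matrix ι ι ℝ}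
    {v : ι → ℝ} (hA : A.IsSymm) (hP : P.IsSymm) (hPP : P * P = P) (hAP : A * P = A)
    (hPv : P *ᵥ v = v) (hn : 0 < P.trace) :
    (P.trace * (v ⬝ᵥ A *ᵥ v) - A.trace * (v ⬝ᵥ v)) ^ 2 ≤
      (P.trace * (A * A).trace - A.trace ^ 2) * ((P.trace - 1) * (v ⬝ᵥ v) ^ 2) := by
  have hPA : P * A = A := by simpa [transpose_mul, hA.eq, hP.eq] using congrArg transpose hAP
  have hvP : v ᵥ* P = v := by rw [← hP.eq, vecMul_transpose, hPv]
  have cauchy_schwarz := trace_mul_sq_le_of_isSymm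
    (A := P.trace • A - A.trace • P) (B := P.trace • vecMulVec v v - (v ⬝ᵥ v) • P)
    ((hA.smul _).sub (hP.smul _))
    (IsSymm.sub (by rw [IsSymm, transpose_smul, transpose_vecMulVec]) (hP.smul _))
  simp only [sub_mul, mul_sub, smul_mul_assoc, mul_smul_comm, hPP, hAP, hPA, mul_vecMulVec,
    vecMulVec_mul, hPv, hvP, vecMulVec_mulVec, trace_sub, trace_smul, trace_vecMulVec,
    smul_eq_mul] at cauchy_schwarz
  refine le_of_mul_le_mul_left ?_ (pow_pos hn 2)
  rw [dotProduct_comm v (A *ᵥ v)]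
  simp only [op_smul_eq_smul, smul_dotProduct, smul_eq_mul] at cauchy_schwarz
  linarith

variable {d : ℕ} {F : Sph d → ℝ}

/-- The matrix of the orthogonal projection onto the tangent space of the sphere at `σ`. -/
def tangentProj (σ : Sph d) : Matrix (Fin d) (Fin d) ℝ := 1 - vecMulVec σ.1.ofLp σ.1.ofLp

theorem tangentProj_isSymm (σ : Sph d) : (tangentProj σ).IsSymm :=
  isSymm_one.sub (transpose_vecMulVec _ _)

theorem tangentProj_mul_self (σ : Sph d) : tangentProj σ * tangentProj σ = tangentProj σ := by
  simp only [tangentProj, sub_mul, mul_sub, one_mul, mul_one, vecMulVec_mul_vecMulVec,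
    σ.dotProduct_self, one_smul, sub_self, sub_zero]

theorem trace_tangentProj (σ : Sph d) : (tangentProj σ).trace = d - 1 := by
  rw [tangentProj, trace_sub, trace_one, trace_vecMulVec, σ.dotProduct_self, Fintype.card_fin]

theorem tangentProj_mulVec_sphGrad (hF : SphSmooth F) (σ : Sph d) :
    tangentProj σ *ᵥ (sphGrad F σ).ofLp = (sphGrad F σ).ofLp := by
  rw [tangentProj, sub_mulVec, one_mulVec, vecMulVec_mulVec, dotProduct_sphGrad hF]
  simp

theorem sphHess_mul_tangentProj (hF : SphSmooth F) (σ : Sph d) :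
    sphHess F σ * tangentProj σ = sphHess F σ := by
  rw [tangentProj, mul_sub, mul_one, mul_vecMulVec, sphHess_mulVec hF, zero_vecMulVec, sub_zero]

theorem sphLap_sq_le (hF : SphSmooth F) (σ : Sph d) :
    sphLap F σ ^ 2 ≤
      ((d : ℝ) - 1) * (Gamma2DD F σ - ((d : ℝ) - 2) * ‖sphGrad F σ‖ ^ 2) := by
  have h := trace_mul_sq_le_of_isSymm (sphHess_isSymm hF σ) (tangentProj_isSymm σ)
  rw [sphHess_mul_tangentProj hF, trace_sphHess hF, tangentProj_mul_self,
    trace_tangentProj] at h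
  rw [Gamma2DD_eq_trace_add hF]
  linarith

theorem inner_sphGrad_norm_sphGrad_sq_sub_sq_le (hd : 2 ≤ d) (hF : SphSmooth F) (σ : Sph d) :
    (((d : ℝ) - 1) * (⟪sphGrad (fun τ => ‖sphGrad F τ‖ ^ 2) σ, sphGrad F σ⟫ / 2)
        - sphLap F σ * ‖sphGrad F σ‖ ^ 2) ^ 2 ≤
      (((d : ℝ) - 1) * (Gamma2DD F σ - ((d : ℝ) - 2) * ‖sphGrad F σ‖ ^ 2) - sphLap F σ ^ 2) *
        (((d : ℝ) - 2) * ‖sphGrad F σ‖ ^ 4) := by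
  have hd' : (2 : ℝ) ≤ d := by exact_mod_cast hd
  have h := sq_le_of_isSymm_of_mul_projection (sphHess_isSymm hF σ) (tangentProj_isSymm σ)
    (tangentProj_mul_self σ) (sphHess_mul_tangentProj hF σ) (tangentProj_mulVec_sphGrad hF σ)
    (by rw [trace_tangentProj]; linarith)
  rw [trace_tangentProj, trace_sphHess hF, sphGrad_dotProduct_self] at h
  rw [Gamma2DD_eq_trace_add hF, inner_sphGrad_norm_sphGrad_sq hF]
  convert h using 2 <;> ring

theorem curvatureDimension_nonneg (hd : 2 ≤ d) (hF : SphSmooth F) (σ : Sph d) :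
    0 ≤ ((d : ℝ) - 2) *
          (((d : ℝ) - 1) * (Gamma2DD F σ - ((d : ℝ) - 2) * ‖sphGrad F σ‖ ^ 2) - sphLap F σ ^ 2)
        - (((d : ℝ) - 1) * (⟪sphGrad (fun τ => ‖sphGrad F τ‖ ^ 2) σ, sphGrad F σ⟫ / 2)
            - sphLap F σ * ‖sphGrad F σ‖ ^ 2)
        + ‖sphGrad F σ‖ ^ 4 / 4 := by
  have hd' : (0 : ℝ) ≤ (d : ℝ) - 2 := sub_nonneg.2 (by exact_mod_cast hd)
  have hX := sub_nonneg.2 (sphLap_sq_le hF σ)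
  have hle := inner_sphGrad_norm_sphGrad_sq_sub_sq_le hd hF σ
  generalize ((d : ℝ) - 1) * (Gamma2DD F σ - ((d : ℝ) - 2) * ‖sphGrad F σ‖ ^ 2)
    - sphLap F σ ^ 2 = X at *
  generalize ((d : ℝ) - 1) * (⟪sphGrad (fun τ => ‖sphGrad F τ‖ ^ 2) σ, sphGrad F σ⟫ / 2)
    - sphLap F σ * ‖sphGrad F σ‖ ^ 2 = a at *
  have amgm : a ^ 2 ≤ (((d : ℝ) - 2) * X + ‖sphGrad F σ‖ ^ 4 / 4) ^ 2 := by
    linarith [sq_nonneg (((d : ℝ) - 2) * X - ‖sphGrad F σ‖ ^ 4 / 4)]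
  have := le_of_abs_le (abs_le_of_sq_le_sq amgm (by positivity))
  linarith

end CurvatureDimension

section IntegralIdentities

variable {d : ℕ} {F G : Sph d → ℝ}

theorem SphSmooth.Gamma2DD (hF : SphSmooth F) : SphSmooth (Gamma2DD F) :=
  (hF.norm_sphGrad_sq.sphLap.const_mul (1 / 2)).sub (hF.inner_sphGrad hF.sphLap)

theorem integral_mul_Gamma2DD (hF : SphSmooth F) (hG : SphSmooth G) :
    ∫ σ, G σ * Gamma2DD F σ ∂(sphMeasure d) =
      ∫ σ, (G σ * sphLap F σ ^ 2 + sphLap F σ * ⟪sphGrad G σ, sphGrad F σ⟫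
        - 1 / 2 * ⟪sphGrad G σ, sphGrad (fun τ => ‖sphGrad F τ‖ ^ 2) σ⟫) ∂(sphMeasure d) := by
  have hq := hF.norm_sphGrad_sq
  have hGL := hG.mul hF.sphLap
  have green_norm_sq := integral_mul_sphLap_add_inner hG hq
  have green_sphLap := integral_mul_sphLap_add_inner hGL hF
  have hRHS := ((hG.mul (hF.sphLap.pow 2)).add (hF.sphLap.mul (hG.inner_sphGrad hF))).sub
    ((hG.inner_sphGrad hq).const_mul (1 / 2))
  rw [← sub_eq_zero, ← integral_sub (hG.mul hF.Gamma2DD).integrable hRHS.integrable]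
  trans ∫ σ, (1 / 2 * (G σ * sphLap (fun τ => ‖sphGrad F τ‖ ^ 2) σ
        + ⟪sphGrad G σ, sphGrad (fun τ => ‖sphGrad F τ‖ ^ 2) σ⟫)
      - (G σ * sphLap F σ * sphLap F σ
        + ⟪sphGrad (fun τ => G τ * sphLap F τ) σ, sphGrad F σ⟫)) ∂(sphMeasure d)
  · congr 1 with σ
    rw [sphGrad_mul hG hF.sphLap, inner_add_left, real_inner_smul_left, real_inner_smul_left,
      Gamma2DD, real_inner_comm (sphGrad _ σ)]
    ring
  · rw [integral_sub (((hG.mul hq.sphLap).add (hG.inner_sphGrad hq)).const_mul _).integrable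
      ((hGL.mul hF.sphLap).add (hGL.inner_sphGrad hF)).integrable, integral_const_mul,
      green_norm_sq, green_sphLap]
    norm_num

theorem integral_Gamma2DD (hF : SphSmooth F) :
    ∫ σ, Gamma2DD F σ ∂(sphMeasure d) = ∫ σ, sphLap F σ ^ 2 ∂(sphMeasure d) := by
  simpa [sphGrad_const] using integral_mul_Gamma2DD hF (sphSmooth_const 1)

theorem integral_exp_mul_Gamma2DD (hF : SphSmooth F) :
    ∫ σ, Real.exp (F σ) * Gamma2DD F σ ∂(sphMeasure d) =
      ∫ σ, Real.exp (F σ) * (sphLap F σ ^ 2 + sphLap F σ * ‖sphGrad F σ‖ ^ 2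
        - ⟪sphGrad (fun τ => ‖sphGrad F τ‖ ^ 2) σ, sphGrad F σ⟫ / 2) ∂(sphMeasure d) := by
  rw [integral_mul_Gamma2DD hF hF.exp]
  congr 1 with σ
  rw [sphGrad_exp hF, real_inner_smul_left, real_inner_smul_left, real_inner_self_eq_norm_sq,
    real_inner_comm (sphGrad F σ)]
  ring

theorem integral_exp_mul_sphLap_mul_norm_sphGrad_sq_add (hF : SphSmooth F) :
    ∫ σ, Real.exp (F σ) * (sphLap F σ * ‖sphGrad F σ‖ ^ 2
      + ⟪sphGrad (fun τ => ‖sphGrad F τ‖ ^ 2) σ, sphGrad F σ⟫ + ‖sphGrad F σ‖ ^ 4)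
        ∂(sphMeasure d) = 0 := by
  rw [← integral_mul_sphLap_add_inner (hF.exp.mul hF.norm_sphGrad_sq) hF]
  congr 1 with σ
  rw [sphGrad_mul hF.exp hF.norm_sphGrad_sq, inner_add_left, real_inner_smul_left,
    real_inner_smul_left, sphGrad_exp hF, real_inner_smul_left, real_inner_self_eq_norm_sq]
  ring

end IntegralIdentities

section SpectralGap

variable {d : ℕ} {f : E d → ℝ} {F : Sph d → ℝ}

open Matrix

theorem norm_fderiv_sq (f : E d → ℝ) (x : E d) :
    ‖fderiv ℝ f x‖ ^ 2 = ∑ i, pderiv i f x ^ 2 := by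
  rw [← (InnerProductSpace.toDual ℝ (E d)).symm.norm_map, EuclideanSpace.real_norm_sq_eq]
  refine Finset.sum_congr rfl fun i _ => ?_
  rw [pderiv, ← InnerProductSpace.toDual_symm_apply (𝕜 := ℝ), EuclideanSpace.inner_single_right]
  simp

theorem sum_fderiv_pderiv_sq (hf : PuncturedSmooth f) (σ : Sph d) :
    ∑ j, (‖fderiv ℝ (pderiv j f) σ‖ ^ 2 - fderiv ℝ (pderiv j f) σ (σ : E d) ^ 2) =
      (hessian f σ * hessian f σ).trace -
        hessian f σ *ᵥ σ.1.ofLp ⬝ᵥ hessian f σ *ᵥ σ.1.ofLp := by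
  have radial (j : Fin d) :
      fderiv ℝ (pderiv j f) σ (σ : E d) = (hessian f σ *ᵥ σ.1.ofLp) j := by
    rw [fderiv_eq_sum_pderiv, mulVec, dotProduct]
    refine Finset.sum_congr rfl fun i _ => ?_
    rw [mul_comm, ← (hessian_isSymm hf σ.ne_zero).apply]
    rfl
  rw [trace_hessian_mul_hessian hf σ.ne_zero]
  simp only [norm_fderiv_sq, radial, Finset.sum_sub_distrib, dotProduct, ← sq]

theorem poincare_inequality_pderiv_of_even (hf : PuncturedSmooth f) (heven : ∀ x, f (-x) = f x) :
    ((d : ℝ) - 1) * ∫ σ : Sph d, ∑ j, pderiv j f σ ^ 2 ∂(sphMeasure d) ≤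
      ∫ σ : Sph d, ((hessian f σ * hessian f σ).trace -
        hessian f σ *ᵥ σ.1.ofLp ⬝ᵥ hessian f σ *ᵥ σ.1.ofLp) ∂(sphMeasure d) := by
  have hC1 (j : Fin d) : ContDiffOn ℝ 1 (pderiv j f) {x | x ≠ 0} := (hf.pderiv j).of_le (by simp)
  have hodd (j : Fin d) (x : E d) : pderiv j f (-x) = -pderiv j f x := by
    have h := mul_pderiv_smul (t := -1) (c := 1) (f := f) (fun x => by simp [heven]) j x
    rw [neg_one_smul] at h
    linarith
  have integrable_sq (j : Fin d) : Integrable (fun σ : Sph d => pderiv j f σ ^ 2)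
      (sphMeasure d) := integrable_sphere ((hf.pderiv j).sphSmooth.continuous.pow 2)
  have integrable_fderiv (j : Fin d) : Integrable (fun σ : Sph d =>
      ‖fderiv ℝ (pderiv j f) σ‖ ^ 2 - fderiv ℝ (pderiv j f) σ (σ : E d) ^ 2) (sphMeasure d) := by
    have hfderiv : Continuous fun σ : Sph d => fderiv ℝ (pderiv j f) σ :=
      ((hC1 j).continuousOn_fderiv_of_isOpen isOpen_ne le_rfl).comp_continuous
        continuous_subtype_val Sph.ne_zero
    exact integrable_sphere
      ((hfderiv.norm.pow 2).sub ((hfderiv.clm_apply continuous_subtype_val).pow 2))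
  simp only [← sum_fderiv_pderiv_sq hf]
  rw [integral_finsetSum _ fun j _ => integrable_sq j,
    integral_finsetSum _ fun j _ => integrable_fderiv j, Finset.mul_sum]
  exact Finset.sum_le_sum fun j _ => poincare_inequality_of_odd (hC1 j) (hodd j)

theorem pderiv_norm_sq_mul_homogExt (hF : SphSmooth F) (σ : Sph d) (i : Fin d) :
    pderiv i (fun x => ‖x‖ ^ 2 * homogExt F x) σ = (sphGrad F σ) i + 2 * σ.1 i * F σ := by
  rw [pderiv_norm_sq_mul (hF.punctured.differentiableAt σ.ne_zero), sphGrad_apply,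
    homogExt_sphere, σ.norm_eq]
  ring

theorem sum_pderiv_norm_sq_mul_homogExt_sq (hF : SphSmooth F) (σ : Sph d) :
    ∑ i, pderiv i (fun x => ‖x‖ ^ 2 * homogExt F x) σ ^ 2 =
      ‖sphGrad F σ‖ ^ 2 + 4 * F σ ^ 2 := by
  have h : (sphGrad F σ).ofLp ⬝ᵥ (sphGrad F σ).ofLp
      + 4 * F σ * (σ.1.ofLp ⬝ᵥ (sphGrad F σ).ofLp) + 4 * F σ ^ 2 * (σ.1.ofLp ⬝ᵥ σ.1.ofLp) =
      ‖sphGrad F σ‖ ^ 2 + 4 * F σ ^ 2 := by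
    rw [sphGrad_dotProduct_self, dotProduct_sphGrad hF, σ.dotProduct_self]
    ring
  rw [← h]
  simp only [dotProduct, Finset.mul_sum, ← Finset.sum_add_distrib]
  refine Finset.sum_congr rfl fun i _ => ?_
  rw [pderiv_norm_sq_mul_homogExt hF]
  ring

theorem hessian_norm_sq_mul_homogExt (hF : SphSmooth F) (σ : Sph d) :
    hessian (fun x => ‖x‖ ^ 2 * homogExt F x) σ =
      sphHess F σ + (1 : ℝ) • (vecMulVec σ.1.ofLp (sphGrad F σ).ofLp
        + vecMulVec (sphGrad F σ).ofLp σ.1.ofLp) + (2 * F σ) • 1 := by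
  ext i j
  have hi := hF.punctured.differentiableAt σ.ne_zero
  have hj := (hF.punctured.pderiv j).differentiableAt σ.ne_zero
  have first (y : E d) (hy : y ≠ 0) : pderiv j (fun x => ‖x‖ ^ 2 * homogExt F x) y =
      ‖y‖ ^ 2 * pderiv j (homogExt F) y + 2 * (y j * homogExt F y) := by
    rw [pderiv_norm_sq_mul (hF.punctured.differentiableAt hy), mul_assoc]
  simp only [hessian, sphHess, of_apply, Matrix.add_apply, Matrix.smul_apply, vecMulVec_apply,
    one_apply, ofLp_sphGrad]
  rw [pderiv_congr first i σ.ne_zero, pderiv_add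
      ((differentiable_fun_id.norm_sq ℝ _).fun_mul hj) (by fun_prop),
    pderiv_norm_sq_mul hj, pderiv_const_mul, pderiv_coord_mul hi, homogExt_sphere, σ.norm_eq]
  simp only [eq_comm (a := i), smul_eq_mul, mul_ite, mul_one, mul_zero]
  split_ifs <;> ring

theorem trace_hessian_norm_sq_mul_homogExt_sq_sub (hF : SphSmooth F) (σ : Sph d) :
    (hessian (fun x => ‖x‖ ^ 2 * homogExt F x) σ *
        hessian (fun x => ‖x‖ ^ 2 * homogExt F x) σ).trace
      - hessian (fun x => ‖x‖ ^ 2 * homogExt F x) σ *ᵥ σ.1.ofLp ⬝ᵥ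
        hessian (fun x => ‖x‖ ^ 2 * homogExt F x) σ *ᵥ σ.1.ofLp =
      Gamma2DD F σ + 4 * (F σ * sphLap F σ + ‖sphGrad F σ‖ ^ 2)
        - ((d : ℝ) + 1) * ‖sphGrad F σ‖ ^ 2 + 4 * ((d : ℝ) - 1) * F σ ^ 2 := by
  have trace_sq := trace_add_smul_vecMulVec_sq (sphHess_isSymm hF σ) (sphHess_mulVec hF σ)
    σ.dotProduct_self (dotProduct_sphGrad hF σ) 1
  rw [hessian_norm_sq_mul_homogExt hF, Gamma2DD_eq_trace_add hF]
  generalize hN : sphHess F σ + (1 : ℝ) • (vecMulVec σ.1.ofLp (sphGrad F σ).ofLp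
        + vecMulVec (sphGrad F σ).ofLp σ.1.ofLp) = N at *
  have trace_N : N.trace = sphLap F σ := by
    simp [← hN, trace_sphHess hF, dotProduct_comm (sphGrad F σ).ofLp, dotProduct_sphGrad hF]
  have mulVec_N : N *ᵥ σ.1.ofLp = (sphGrad F σ).ofLp := by
    simp [← hN, add_mulVec, vecMulVec_mulVec, sphHess_mulVec hF, σ.dotProduct_self,
      dotProduct_comm (sphGrad F σ).ofLp, dotProduct_sphGrad hF]
  have trace_shift (c : ℝ) : ((N + c • 1) * (N + c • 1)).trace =
      (N * N).trace + 2 * c * N.trace + c ^ 2 * d := by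
    simp only [mul_add, add_mul, smul_mul_assoc, one_mul, mul_smul_comm, mul_one, smul_add,
      trace_add, trace_smul, smul_eq_mul, trace_one, Fintype.card_fin]
    ring
  rw [trace_shift, trace_sq, trace_N, add_mulVec, mulVec_N, smul_mulVec, one_mulVec]
  simp only [add_dotProduct, dotProduct_add, smul_dotProduct, dotProduct_smul, smul_eq_mul,
    sphGrad_dotProduct_self, σ.dotProduct_self, dotProduct_sphGrad hF,
    dotProduct_comm (sphGrad F σ).ofLp σ.1.ofLp]
  ring

theorem two_mul_integral_norm_sphGrad_sq_le_of_even (hF : SphSmooth F)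
    (heven : ∀ σ, F (-σ) = F σ) :
    2 * (d : ℝ) * ∫ σ, ‖sphGrad F σ‖ ^ 2 ∂(sphMeasure d) ≤
      ∫ σ, sphLap F σ ^ 2 ∂(sphMeasure d) := by
  have green := integral_mul_sphLap_add_inner hF hF
  simp only [real_inner_self_eq_norm_sq] at green
  have hq := hF.norm_sphGrad_sq
  have hF2 := hF.pow 2
  have h := poincare_inequality_pderiv_of_even (f := fun x => ‖x‖ ^ 2 * homogExt F x)
    ((contDiff_norm_sq ℝ).contDiffOn.mul hF.punctured) fun x => by
      rw [norm_neg, homogExt_neg heven]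
  simp only [sum_pderiv_norm_sq_mul_homogExt_sq hF,
    trace_hessian_norm_sq_mul_homogExt_sq_sub hF] at h
  rw [integral_add hq.integrable (hF2.const_mul 4).integrable,
    integral_add (((hF.Gamma2DD.add (((hF.mul hF.sphLap).add hq).const_mul 4)).sub
      (hq.const_mul _)).integrable) (hF2.const_mul _).integrable,
    integral_sub (hF.Gamma2DD.add (((hF.mul hF.sphLap).add hq).const_mul 4)).integrable
      (hq.const_mul _).integrable,
    integral_add hF.Gamma2DD.integrable (((hF.mul hF.sphLap).add hq).const_mul 4).integrable,
    integral_const_mul, integral_const_mul, integral_const_mul, integral_const_mul, green,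
    integral_Gamma2DD hF] at h
  linarith

end SpectralGap

section LogSobolev

variable {d : ℕ} {F : Sph d → ℝ}

theorem two_mul_integral_exp_mul_norm_sphGrad_sq_le_of_even (hF : SphSmooth F)
    (heven : ∀ σ, F (-σ) = F σ) :
    2 * (d : ℝ) * ∫ σ, Real.exp (F σ) * ‖sphGrad F σ‖ ^ 2 ∂(sphMeasure d) ≤
      ∫ σ, Real.exp (F σ) * (sphLap F σ + ‖sphGrad F σ‖ ^ 2 / 2) ^ 2 ∂(sphMeasure d) := by
  have hhalf : SphSmooth fun σ => 1 / 2 * F σ := hF.const_mul _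
  have exp_sq (t : ℝ) : Real.exp (1 / 2 * t) ^ 2 = Real.exp t := by
    rw [← Real.exp_nat_mul]
    congr 1
    push_cast
    ring
  have grad (σ : Sph d) : ‖sphGrad (fun τ => Real.exp (1 / 2 * F τ)) σ‖ ^ 2 =
      1 / 4 * (Real.exp (F σ) * ‖sphGrad F σ‖ ^ 2) := by
    rw [sphGrad_exp hhalf, sphGrad_const_mul, norm_smul, norm_smul, mul_pow, mul_pow,
      Real.norm_eq_abs, sq_abs, exp_sq]
    simp only [one_div, norm_inv, Real.norm_ofNat, inv_pow]
    ring
  have laplacian (σ : Sph d) : sphLap (fun τ => Real.exp (1 / 2 * F τ)) σ ^ 2 =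
      1 / 4 * (Real.exp (F σ) * (sphLap F σ + ‖sphGrad F σ‖ ^ 2 / 2) ^ 2) := by
    rw [sphLap_exp hhalf, sphLap_const_mul, sphGrad_const_mul, norm_smul, mul_pow, exp_sq]
    simp only [one_div, norm_inv, Real.norm_ofNat]
    ring
  have gap := two_mul_integral_norm_sphGrad_sq_le_of_even hhalf.exp fun σ => by rw [heven]
  simp only [grad, laplacian, integral_const_mul] at gap
  linarith

-- The multiples of the two integrations by parts are those that turn the integrand of the
-- curvature-dimension inequality into a combination of `Γ²`, `|∇F|²` and `(ΔF + |∇F|² / 2)²`.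
theorem integral_exp_mul_sphLap_add_sq_le (hd : 2 ≤ d) (hF : SphSmooth F) :
    (4 * (d : ℝ) - 5) *
        ∫ σ, Real.exp (F σ) * (sphLap F σ + ‖sphGrad F σ‖ ^ 2 / 2) ^ 2 ∂(sphMeasure d) ≤
      ((d : ℝ) - 1) * (((d : ℝ) + 1) * ∫ σ, Real.exp (F σ) * Gamma2DD F σ ∂(sphMeasure d)
        - ((d : ℝ) - 2) ^ 2 * ∫ σ, Real.exp (F σ) * ‖sphGrad F σ‖ ^ 2 ∂(sphMeasure d)) := by
  have gamma := integral_exp_mul_Gamma2DD hF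
  have green := integral_exp_mul_sphLap_mul_norm_sphGrad_sq_add hF
  have hE := hF.exp
  have hL := hF.sphLap
  have hq := hF.norm_sphGrad_sq
  have hC := hq.inner_sphGrad hF
  have hq4 := hq.pow 2
  simp only [← pow_mul, Nat.reduceMul] at hq4
  have hS := (hE.mul ((hL.add (hq.const_mul (1 / 2))).pow 2)).integrable
  have hX := (hE.mul (((hL.pow 2).add (hL.mul hq)).sub (hC.const_mul (1 / 2)))).integrable
  have hY := (hE.mul (((hL.mul hq).add hC).add hq4)).integrable
  have hG := (hE.mul hF.Gamma2DD).integrable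
  have hI := (hE.mul hq).integrable
  simp only [one_div_mul_eq_div] at hS hX
  have mono := integral_mono
    (((hS.const_mul (4 * (d : ℝ) - 5)).sub (hX.const_mul (3 * ((d : ℝ) - 1)))).sub
      (hY.const_mul ((d : ℝ) - 1)))
    ((hG.const_mul (((d : ℝ) - 1) * ((d : ℝ) - 2))).sub
      (hI.const_mul (((d : ℝ) - 1) * ((d : ℝ) - 2) ^ 2))) fun σ => by
        have := mul_nonneg (Real.exp_pos (F σ)).le (curvatureDimension_nonneg hd hF σ)
        simp only [Pi.sub_apply]
        linarith
  rw [integral_sub' ((hS.const_mul _).sub (hX.const_mul _)) (hY.const_mul _),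
    integral_sub' (hS.const_mul _) (hX.const_mul _),
    integral_sub' (hG.const_mul _) (hI.const_mul _),
    integral_const_mul, integral_const_mul, integral_const_mul, integral_const_mul,
    integral_const_mul, ← gamma, green] at mono
  linarith

theorem integral_exp_mul_norm_sphGrad_sq_le_Gamma2DD (hd : 2 ≤ d) (hF : SphSmooth F)
    (heven : ∀ σ, F (-σ) = F σ) :
    ((d : ℝ) + 3 - 1 / ((d : ℝ) - 1)) *
        ∫ σ, Real.exp (F σ) * ‖sphGrad F σ‖ ^ 2 ∂(sphMeasure d) ≤
      ∫ σ, Real.exp (F σ) * Gamma2DD F σ ∂(sphMeasure d) := by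
  have gap := two_mul_integral_exp_mul_norm_sphGrad_sq_le_of_even hF heven
  have curvature := integral_exp_mul_sphLap_add_sq_le hd hF
  have hd' : (2 : ℝ) ≤ d := by exact_mod_cast hd
  have hn : (d : ℝ) - 1 ≠ 0 := by linarith
  refine le_of_mul_le_mul_left ?_ (by nlinarith : 0 < ((d : ℝ) - 1) * ((d : ℝ) + 1))
  have hΛ : ((d : ℝ) - 1) * ((d : ℝ) + 1) * ((d : ℝ) + 3 - 1 / ((d : ℝ) - 1)) =
      2 * d * (4 * d - 5) + ((d : ℝ) - 1) * ((d : ℝ) - 2) ^ 2 := by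
    field_simp
    ring
  rw [← mul_assoc, hΛ]
  linarith [mul_le_mul_of_nonneg_left gap (by linarith : (0 : ℝ) ≤ 4 * d - 5)]

end LogSobolev

/-- The log-Sobolev inequality for the spherical Laplacian with constant
`Λ_Δ = d + 3 - 1/(d-1)`, which is `> d`. -/
theorem logSobolev_laplacian
    (d : ℕ) (hd : 2 ≤ d) :
    (∀ F : Sph d → ℝ, SphSmooth F → (∀ σ, 0 < F σ) → (∀ σ, F (-σ) = F σ) →
      ((d : ℝ) + 3 - 1 / ((d : ℝ) - 1)) *
          (∫ (σ : Sph d), ‖sphGrad (fun τ => Real.log (F τ)) σ‖ ^ 2 * F σ ∂(sphMeasure d))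
        ≤ ∫ (σ : Sph d), Gamma2DD (fun τ => Real.log (F τ)) σ * F σ ∂(sphMeasure d)) ∧
    (d : ℝ) < (d : ℝ) + 3 - 1 / ((d : ℝ) - 1) := by
  refine ⟨fun F hF hpos heven => ?_, ?_⟩
  · have h := integral_exp_mul_norm_sphGrad_sq_le_Gamma2DD hd (hF.log hpos) fun σ => by
      rw [heven]
    simpa only [Real.exp_log (hpos _), mul_comm (F _)] using h
  · have hd' : (2 : ℝ) ≤ d := by exact_mod_cast hd
    have : 1 / ((d : ℝ) - 1) ≤ 1 := (div_le_one (by linarith)).2 (by linarith)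
    linarith
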